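/- arXiv:1911.03962 — 2 statements merged into one kernel-verified Lean document; each statement's English description precedes it below -/
import Mathlib

section
/- Composition of cowordisms is associative: given cowordisms σ : X → Y, τ : Y → Z, ρ : Z → W, it holds that (ρ ∘ τ) ∘ σ = ρ ∘ (τ ∘ σ). -/
/-- A boundary: a natural number `card` together with a set of left endpoints
`left ⊆ {1,…,card}`. -/
structure Boundary where
  card : ℕ
  left : Finset ℕ
  left_sub : left ⊆ Finset.Icc 1 card

namespace Boundary

/-- Tensor product of boundaries. -/
def tensor (X Y : Boundary) : Boundary where
  card := X.card + Y.card
  left := X.left ∪ Y.left.image (fun m => X.card + m)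
  left_sub := by
    intro i hi
    simp only [Finset.mem_union, Finset.mem_image] at hi
    rcases hi with h | ⟨m, hm, rfl⟩
    · have := X.left_sub h
      simp only [Finset.mem_Icc] at this ⊢
      omega
    · have := Y.left_sub hm
      simp only [Finset.mem_Icc] at this ⊢
      omega

/-- Dual boundary: reverse the order and the polarity of endpoints. -/
def dual (X : Boundary) : Boundary where
  card := X.card
  left := (Finset.Icc 1 X.card \ X.left).image (fun m => X.card + 1 - m)
  left_sub := by
    intro i hi
    simp only [Finset.mem_image, Finset.mem_sdiff, Finset.mem_Icc] at hi ⊢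
    obtain ⟨m, ⟨⟨h1, h2⟩, _⟩, rfl⟩ := hi
    omega

/-- The unit boundary `𝟏`. -/
def unit : Boundary := ⟨0, ∅, by simp⟩

end Boundary
/-- Cyclic words over `T`: words up to cyclic permutation. -/
abbrev CyclicWord (T : Type) := Quot (fun (l₁ l₂ : List T) => ∃ a b, l₁ = a ++ b ∧ l₂ = b ++ a)

/-- The underlying data of a multiword over `T`: a multiset of labelled directed
edges (the regular part) together with a multiset of cyclic words (the singular part). -/
structure Pre (T : Type) where
  edges : Multiset (ℕ × List T × ℕ)
  singular : Multiset (CyclicWord T)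

/-- `M` is a multiword with boundary `B`: the edges form a perfect matching on
`{1,…,B.card}`, each edge going from a left endpoint to a right endpoint. -/
def IsMW {T : Type} (B : Boundary) (M : Pre T) : Prop :=
  (∀ e ∈ M.edges, e.1 ∈ B.left ∧ e.2.2 ∈ Finset.Icc 1 B.card \ B.left) ∧
  ∀ v ∈ Finset.Icc 1 B.card, Multiset.countP (fun e => e.1 = v ∨ e.2.2 = v) M.edges = 1

/-- A cowordism `σ : X → Y` over `T` is a multiword with boundary `Y ⊗ X^⊥`. -/
def Cowordism (T : Type) (X Y : Boundary) := {M : Pre T // IsMW (Y.tensor X.dual) M}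

/-- Elementary contraction: glue the boundary points `n` and `n+1` (of opposite
polarity), concatenating words along glued edges; an edge joining `n` and `n+1`
directly becomes a cyclic word in the singular part. -/
def contractAt {T : Type} (n : ℕ) (M : Pre T) : Pre T where
  edges :=
    (M.edges.filter (fun e =>
        (e.1 ≠ n ∧ e.1 ≠ n + 1) ∧ (e.2.2 ≠ n ∧ e.2.2 ≠ n + 1))).map
      (fun e => ((if e.1 < n then e.1 else e.1 - 2), e.2.1,
                 (if e.2.2 < n then e.2.2 else e.2.2 - 2))) +
    (M.edges.filter (fun e =>
        (e.1 ≠ n ∧ e.1 ≠ n + 1) ∧ (e.2.2 = n ∨ e.2.2 = n + 1))).bind (fun e₁ =>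
      (M.edges.filter (fun e₂ => (e₂.2.2 ≠ n ∧ e₂.2.2 ≠ n + 1) ∧
          ((e₁.2.2 = n ∧ e₂.1 = n + 1) ∨ (e₁.2.2 = n + 1 ∧ e₂.1 = n)))).map
        (fun e₂ => ((if e₁.1 < n then e₁.1 else e₁.1 - 2), e₁.2.1 ++ e₂.2.1,
                    (if e₂.2.2 < n then e₂.2.2 else e₂.2.2 - 2))))
  singular := M.singular +
    (M.edges.filter (fun e =>
        (e.1 = n ∨ e.1 = n + 1) ∧ (e.2.2 = n ∨ e.2.2 = n + 1))).map
      (fun e => (Quot.mk _ e.2.1 : CyclicWord T))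

/-- Iterated contraction `⟨M⟩_{i + Y^⊥ ⊗ Y}` where `k = |Y|`: contract at the
pairs `(i+k, i+k+1)`, `(i+k-1, i+k)`, …, `(i+1, i+2)` in this order. -/
def contractIter {T : Type} (i : ℕ) : ℕ → Pre T → Pre T
  | 0, M => M
  | k + 1, M => contractIter i k (contractAt (i + k + 1) M)

/-- Tensor product of multiwords, the first one having boundary of cardinality `c`. -/
def mwTensor {T : Type} (c : ℕ) (M N : Pre T) : Pre T where
  edges := M.edges + N.edges.map (fun e => (c + e.1, e.2.1, c + e.2.2))
  singular := M.singular + N.singular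

/-- Composition `τ ∘ σ` of cowordisms `σ : X → Y` (boundary `Y ⊗ X^⊥`) and
`τ : Y → Z` (boundary `Z ⊗ Y^⊥`), where `nY = |Y|`, `nZ = |Z|`:
the iterated contraction `⟨τ ⊗ σ⟩_{|Z| + Y^⊥ ⊗ Y}`. -/
def compData {T : Type} (nY nZ : ℕ) (τ σ : Pre T) : Pre T :=
  contractIter nZ nY (mwTensor (nZ + nY) τ σ)

/-- The identity cowordism `id_X : X → X`. -/
def idPre (T : Type) (X : Boundary) : Pre T where
  edges :=
    (X.left.val.map fun i => (i, ([] : List T), 2 * X.card - i + 1)) +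
    ((Finset.Icc 1 X.card \ X.left).val.map fun i => (2 * X.card - i + 1, ([] : List T), i))
  singular := 0

/-- The symmetry cowordism `s_{X,Y} : X ⊗ Y → Y ⊗ X`. -/
def symPre (T : Type) (X Y : Boundary) : Pre T where
  edges :=
    (X.left.val.map fun i =>
      (Y.card + i, ([] : List T), 2 * X.card + 2 * Y.card - i + 1)) +
    ((Finset.Icc 1 X.card \ X.left).val.map fun i =>
      (2 * X.card + 2 * Y.card - i + 1, ([] : List T), Y.card + i)) +
    (Y.left.val.map fun i =>
      (i, ([] : List T), X.card + 2 * Y.card - i + 1)) +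
    ((Finset.Icc 1 Y.card \ Y.left).val.map fun i =>
      (X.card + 2 * Y.card - i + 1, ([] : List T), i))
  singular := 0

/-- Tensor product of cowordisms `σ : X → Y` and `τ : Z → W` (as a multiword
with boundary `Y ⊗ W ⊗ Z^⊥ ⊗ X^⊥`), where `nY = |Y|`, `nW = |W|`, `nZ = |Z|`. -/
def cowTensorData {T : Type} (nY nW nZ : ℕ) (σ τ : Pre T) : Pre T where
  edges :=
    σ.edges.map (fun e =>
      ((if e.1 ≤ nY then e.1 else e.1 + nW + nZ), e.2.1,
       (if e.2.2 ≤ nY then e.2.2 else e.2.2 + nW + nZ))) +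
    τ.edges.map (fun e => (nY + e.1, e.2.1, nY + e.2.2))
  singular := σ.singular + τ.singular

/-- The dual `σ^⊥ : Y^⊥ → X^⊥` of a cowordism `σ : X → Y`, where `nX = |X|`,
`nY = |Y|`: re-index via the cyclic permutation. -/
def dualData {T : Type} (nX nY : ℕ) (σ : Pre T) : Pre T where
  edges := σ.edges.map (fun e =>
    ((if e.1 ≤ nY then e.1 + nX else e.1 - nY), e.2.1,
     (if e.2.2 ≤ nY then e.2.2 + nX else e.2.2 - nY)))
  singular := σ.singular

/-!
Up to renumbering the remaining points, an iterated contraction glues the nested pairs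
`{i + 1, i + 2 * k}, …, {i + k, i + k + 1}` one after the other. Both composites of `σ`, `τ`, `ρ`
therefore arise from `ρ ⊗ τ ⊗ σ` by gluing the same pairs, those of `Z^⊥ ⊗ Z` and those of
`Y^⊥ ⊗ Y`, only in different orders, and it suffices that gluings of disjoint pairs `p` and `q`
commute. Gluing `p` turns the edges `E` into the part of `E + E ·_p E` that avoids `p`, where
`E ·_p F` is the bilinear and associative product of concatenations across `p`. Expanding the gluing
of `p` followed by that of `q` gives terms symmetric in `p` and `q`, except for
`E ·_p E ·_q E ·_p E`. This term vanishes: the first and third factors end in the same point of `p`,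
hence have the same source, and that source lies in `q`. The cyclic words agree because `e f` and
`f e` are rotations of each other.
-/

/-- A labelled edge `(source, word, target)` of a multiword. -/
abbrev Edge (T : Type) := ℕ × List T × ℕ

namespace Edge

variable {T : Type}

/-- The edge obtained by gluing the target of `e` to the source of `f`. -/
def append (e f : Edge T) : Edge T := (e.1, e.2.1 ++ f.2.1, f.2.2)

theorem append_assoc (e f g : Edge T) : (e.append f).append g = e.append (f.append g) := by
  simp only [append, List.append_assoc]

/-- The edge `e` has no endpoint in the pair `p`. -/
abbrev Avoids (p : Sym2 ℕ) (e : Edge T) : Prop := e.1 ∉ p ∧ e.2.2 ∉ p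

/-- Both endpoints of the edge `e` lie in the pair `p`. -/
abbrev IsLoop (p : Sym2 ℕ) (e : Edge T) : Prop := e.1 ∈ p ∧ e.2.2 ∈ p

end Edge

namespace Pre

variable {T : Type}

/-- All concatenations `e f` with `e ∈ E` and `f ∈ F` such that the pair `p` consists of the target
of `e` and the source of `f`. -/
def join (p : Sym2 ℕ) (E F : Multiset (Edge T)) : Multiset (Edge T) :=
  E.bind fun e => (F.filter fun f => s(e.2.2, f.1) = p).map (Edge.append e)

theorem mem_join {p : Sym2 ℕ} {E F : Multiset (Edge T)} {g : Edge T} :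
    g ∈ join p E F ↔ ∃ e ∈ E, ∃ f ∈ F, s(e.2.2, f.1) = p ∧ e.append f = g := by
  simp only [join, Multiset.mem_bind, Multiset.mem_map, Multiset.mem_filter, and_assoc]

theorem join_add_left (p : Sym2 ℕ) (E E' F : Multiset (Edge T)) :
    join p (E + E') F = join p E F + join p E' F :=
  Multiset.add_bind _ _ _

theorem join_add_right (p : Sym2 ℕ) (E F F' : Multiset (Edge T)) :
    join p E (F + F') = join p E F + join p E F' := by
  simp only [join, Multiset.filter_add, Multiset.map_add, Multiset.bind_add]

theorem join_assoc (p q : Sym2 ℕ) (E F G : Multiset (Edge T)) :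
    join q (join p E F) G = join p E (join q F G) := by
  simp only [join, Multiset.bind_assoc, Multiset.bind_map, Multiset.filter_bind,
    Multiset.map_bind, Multiset.bind_filter, Multiset.filter_map, Multiset.map_map]
  refine Multiset.bind_congr fun e _ => Multiset.bind_congr fun f _ => ?_
  split_ifs with h
  · exact .trans (Multiset.map_congr rfl fun g _ => Edge.append_assoc e f g)
      (congrArg _ (Multiset.filter_eq_self.2 fun _ _ => h).symm)
  · exact (congrArg (Multiset.map _) (Multiset.filter_eq_nil.2 fun _ _ => h)).symm

theorem filter_avoids_join {p q : Sym2 ℕ} (hpq : ∀ v ∈ q, v ∉ p) (E F : Multiset (Edge T)) :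
    (join q E F).filter (Edge.Avoids p) =
      join q (E.filter (Edge.Avoids p)) (F.filter (Edge.Avoids p)) := by
  simp only [join, Multiset.filter_bind, Multiset.bind_filter, Multiset.filter_map,
    Multiset.filter_filter]
  refine Multiset.bind_congr fun e _ => ?_
  have avoids_append {f : Edge T} (hf : s(e.2.2, f.1) = q) :
      (e.append f).Avoids p ↔ e.Avoids p ∧ f.Avoids p := by
    have he : e.2.2 ∉ p := hpq _ (hf ▸ Sym2.mem_mk_left _ _)
    have hf : f.1 ∉ p := hpq _ (hf ▸ Sym2.mem_mk_right _ _)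
    simp only [Edge.Avoids, Edge.append, he, hf, not_false_eq_true, and_true, true_and]
  split_ifs with he
  · congr 1
    refine Multiset.filter_congr fun f _ => ?_
    simp only [Function.comp_apply]
    grind only
  · rw [Multiset.filter_eq_nil.2, Multiset.map_zero]
    rintro f - ⟨hf, hq⟩
    exact he ((avoids_append hq).1 hf).1

/-- The cyclic words created when the pair `p` is glued. -/
def loops (p : Sym2 ℕ) (E : Multiset (Edge T)) : Multiset (CyclicWord T) :=
  (E.filter (Edge.IsLoop p)).map fun e => Quot.mk _ e.2.1

theorem loops_add (p : Sym2 ℕ) (E F : Multiset (Edge T)) :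
    loops p (E + F) = loops p E + loops p F := by
  simp only [loops, Multiset.filter_add, Multiset.map_add]

theorem loops_filter_avoids {p q : Sym2 ℕ} (hpq : ∀ v ∈ q, v ∉ p) (E : Multiset (Edge T)) :
    loops q (E.filter (Edge.Avoids p)) = loops q E := by
  rw [loops, loops, Multiset.filter_filter]
  congr 1
  exact Multiset.filter_congr fun e _ =>
    and_iff_left_of_imp fun he => ⟨hpq _ he.1, hpq _ he.2⟩

/-- Gluing of the pair of points `p`, with all remaining points keeping their labels. -/
def glue (p : Sym2 ℕ) (M : Pre T) : Pre T where
  edges := (M.edges + join p M.edges M.edges).filter (Edge.Avoids p)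
  singular := M.singular + loops p M.edges

theorem mem_edges_glue {p : Sym2 ℕ} {M : Pre T} {g : Edge T} :
    g ∈ (glue p M).edges ↔ (g ∈ M.edges ∨
      ∃ e ∈ M.edges, ∃ f ∈ M.edges, s(e.2.2, f.1) = p ∧ Edge.append e f = g) ∧ g.Avoids p := by
  rw [glue, Multiset.mem_filter, Multiset.mem_add, mem_join]

/-- The weak form of the matching condition that is stable under gluing: edges run from the set
`L` of left points to its complement, and edges with the same target have the same source. -/
structure IsPolarized (L : Set ℕ) (M : Pre T) : Prop where
  source_mem : ∀ e ∈ M.edges, e.1 ∈ L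
  target_notMem : ∀ e ∈ M.edges, e.2.2 ∉ L
  source_eq : ∀ e ∈ M.edges, ∀ f ∈ M.edges, e.2.2 = f.2.2 → e.1 = f.1

/-- The two points of the pair `p` have opposite polarity with respect to the set `L` of left
points. -/
def IsOpposite (L : Set ℕ) (p : Sym2 ℕ) : Prop := ∃ a ∈ L, ∃ b ∉ L, p = s(a, b)

theorem IsOpposite.eq_of_notMem {L : Set ℕ} {p : Sym2 ℕ} (hp : IsOpposite L p) {x y : ℕ}
    (hxp : x ∈ p) (hyp : y ∈ p) (hx : x ∉ L) (hy : y ∉ L) : x = y := by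
  obtain ⟨a, ha, b, -, rfl⟩ := hp
  rw [Sym2.mem_iff] at hxp hyp
  grind only

theorem IsPolarized.glue {L : Set ℕ} {M : Pre T} (hM : IsPolarized L M) (p : Sym2 ℕ) :
    IsPolarized L (M.glue p) where
  source_mem g hg := by
    obtain ⟨hg | ⟨e, he, f, -, -, rfl⟩, -⟩ := mem_edges_glue.1 hg
    exacts [hM.source_mem _ hg, hM.source_mem e he]
  target_notMem g hg := by
    obtain ⟨hg | ⟨e, -, f, hf, -, rfl⟩, -⟩ := mem_edges_glue.1 hg
    exacts [hM.target_notMem _ hg, hM.target_notMem f hf]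
  source_eq := by
    have source_ne {e f g : Edge T} (hf : f ∈ M.edges) (hg : g ∈ M.edges) (hgp : g.Avoids p)
        (hef : s(e.2.2, f.1) = p) : f.2.2 ≠ g.2.2 := fun hfg =>
      hgp.1 (hM.source_eq f hf g hg hfg ▸ hef ▸ Sym2.mem_mk_right _ _)
    intro g hg g' hg' h
    obtain ⟨hg | ⟨e, he, f, hf, hef, rfl⟩, hgp⟩ := mem_edges_glue.1 hg <;>
      obtain ⟨hg' | ⟨e', he', f', hf', hef', rfl⟩, hgp'⟩ := mem_edges_glue.1 hg'
    · exact hM.source_eq _ hg _ hg' h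
    · exact (source_ne hf' hg hgp hef' h.symm).elim
    · exact (source_ne hf hg' hgp' hef h).elim
    · rw [← hef', hM.source_eq f hf f' hf' h, Sym2.congr_left] at hef
      exact hM.source_eq e he e' he' hef

theorem IsPolarized.loops_join {L : Set ℕ} {M : Pre T} (hM : IsPolarized L M) (p q : Sym2 ℕ) :
    loops q (join p M.edges M.edges) = M.edges.bind fun e => M.edges.bind fun f =>
      if s(e.2.2, f.1) = p ∧ s(f.2.2, e.1) = q then {Quot.mk _ (e.2.1 ++ f.2.1)} else 0 := by
  simp only [loops, join, Multiset.filter_bind, Multiset.map_bind, Multiset.filter_map,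
    Multiset.map_map, Multiset.filter_filter]
  refine Multiset.bind_congr fun e he => ?_
  rw [← Multiset.bind_filter, Multiset.bind_singleton]
  refine Multiset.map_congr (Multiset.filter_congr fun f hf => ?_) fun f _ => rfl
  have hne : f.2.2 ≠ e.1 := fun h => hM.target_notMem f hf (h ▸ hM.source_mem e he)
  rw [and_comm, eq_comm (b := q), ← Sym2.mem_and_mem_iff hne, and_comm (a := f.2.2 ∈ q)]
  rfl

theorem IsPolarized.loops_join_comm {L : Set ℕ} {M : Pre T} (hM : IsPolarized L M)
    (p q : Sym2 ℕ) :
    loops q (join p M.edges M.edges) = loops p (join q M.edges M.edges) := by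
  rw [hM.loops_join, hM.loops_join, Multiset.bind_bind]
  refine Multiset.bind_congr fun f _ => Multiset.bind_congr fun e _ => ?_
  have rotate : (Quot.mk _ (e.2.1 ++ f.2.1) : CyclicWord T) = Quot.mk _ (f.2.1 ++ e.2.1) :=
    Quot.sound ⟨_, _, rfl, rfl⟩
  simp only [rotate, and_comm]

theorem IsPolarized.filter_avoids_join_join {L : Set ℕ} {M : Pre T} (hM : IsPolarized L M)
    {p : Sym2 ℕ} (hp : IsOpposite L p) (q : Sym2 ℕ) :
    (join q (join p M.edges M.edges) (join p M.edges M.edges)).filter (Edge.Avoids q) = 0 := by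
  refine Multiset.filter_eq_nil.2 fun g hg hgq => ?_
  obtain ⟨_, h₁₂, _, h₃₄, hq, rfl⟩ := mem_join.1 hg
  obtain ⟨e₁, he₁, e₂, -, hp₁₂, rfl⟩ := mem_join.1 h₁₂
  obtain ⟨e₃, he₃, e₄, -, hp₃₄, rfl⟩ := mem_join.1 h₃₄
  have target_eq : e₁.2.2 = e₃.2.2 :=
    hp.eq_of_notMem (hp₁₂ ▸ Sym2.mem_mk_left _ _) (hp₃₄ ▸ Sym2.mem_mk_left _ _)
      (hM.target_notMem e₁ he₁) (hM.target_notMem e₃ he₃)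
  have source_mem : e₃.1 ∈ q := hq ▸ Sym2.mem_mk_right _ _
  exact hgq.1 (hM.source_eq e₁ he₁ e₃ he₃ target_eq ▸ source_mem)

theorem IsPolarized.edges_glue_glue {L : Set ℕ} {M : Pre T} (hM : IsPolarized L M)
    {p q : Sym2 ℕ} (hp : IsOpposite L p) (hpq : ∀ v ∈ q, v ∉ p) :
    ((M.glue p).glue q).edges =
      (M.edges + (join p M.edges M.edges + join q M.edges M.edges) +
        (join p M.edges (join q M.edges M.edges) +
          join q M.edges (join p M.edges M.edges))).filter
        fun e => Edge.Avoids p e ∧ Edge.Avoids q e := by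
  have quartic : (join p M.edges (join q M.edges (join p M.edges M.edges))).filter
      (fun e => Edge.Avoids p e ∧ Edge.Avoids q e) = 0 := by
    rw [← join_assoc, ← Multiset.filter_filter, hM.filter_avoids_join_join hp, Multiset.filter_zero]
  simp only [Pre.glue]
  rw [← filter_avoids_join hpq, ← Multiset.filter_add, Multiset.filter_filter]
  simp only [join_add_left, join_add_right, join_assoc p q, and_comm (a := Edge.Avoids q _)]
  simp only [Multiset.filter_add, quartic]
  abel

theorem singular_glue_glue (M : Pre T) {p q : Sym2 ℕ} (hpq : ∀ v ∈ q, v ∉ p) :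
    ((M.glue p).glue q).singular = M.singular + (loops p M.edges + loops q M.edges) +
      loops q (join p M.edges M.edges) := by
  simp only [glue, loops_filter_avoids hpq, loops_add, add_assoc]

theorem IsPolarized.glue_comm {L : Set ℕ} {M : Pre T} (hM : IsPolarized L M) {p q : Sym2 ℕ}
    (hp : IsOpposite L p) (hq : IsOpposite L q) (hpq : ∀ v ∈ q, v ∉ p) :
    (M.glue p).glue q = (M.glue q).glue p := by
  have hqp : ∀ v ∈ p, v ∉ q := fun v hvp hvq => hpq v hvq hvp
  rw [Pre.mk.injEq, hM.edges_glue_glue hp hpq, hM.edges_glue_glue hq hqp, singular_glue_glue M hpq,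
    singular_glue_glue M hqp, hM.loops_join_comm p q]
  simp only [add_comm, and_comm, and_self]

/-- Relabelling of the points of a multiword along `f`. -/
def relabel (f : ℕ → ℕ) (M : Pre T) : Pre T where
  edges := M.edges.map fun e => (f e.1, e.2.1, f e.2.2)
  singular := M.singular

theorem relabel_relabel (f g : ℕ → ℕ) (M : Pre T) :
    (M.relabel g).relabel f = M.relabel (f ∘ g) := by
  simp only [relabel, Multiset.map_map, Function.comp_def]

/-- The set of endpoints of the edges of a multiword. -/
def verts (M : Pre T) : Set ℕ := {v | ∃ e ∈ M.edges, e.1 = v ∨ e.2.2 = v}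

theorem source_mem_verts {M : Pre T} {e : Edge T} (he : e ∈ M.edges) : e.1 ∈ M.verts :=
  ⟨e, he, .inl rfl⟩

theorem target_mem_verts {M : Pre T} {e : Edge T} (he : e ∈ M.edges) : e.2.2 ∈ M.verts :=
  ⟨e, he, .inr rfl⟩

theorem relabel_congr {f g : ℕ → ℕ} {M : Pre T} (h : Set.EqOn f g M.verts) :
    M.relabel f = M.relabel g := by
  rw [relabel, relabel, Pre.mk.injEq]
  refine ⟨Multiset.map_congr rfl fun e he => ?_, rfl⟩
  rw [h (source_mem_verts he), h (target_mem_verts he)]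

theorem relabel_eq_self {f : ℕ → ℕ} {M : Pre T} (h : Set.EqOn f id M.verts) :
    M.relabel f = M := by
  rw [relabel_congr h]
  exact congrArg₂ Pre.mk (Multiset.map_id _) rfl

theorem verts_relabel (f : ℕ → ℕ) (M : Pre T) : (M.relabel f).verts = f '' M.verts := by
  ext v
  simp only [verts, relabel, Multiset.mem_map, Set.mem_image, Set.mem_ofPred_eq]
  grind

theorem verts_glue_subset (p : Sym2 ℕ) (M : Pre T) :
    (M.glue p).verts ⊆ {v ∈ M.verts | v ∉ p} := by
  rintro v ⟨g, hg, hv⟩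
  obtain ⟨hg, hgp⟩ := mem_edges_glue.1 hg
  have source_mem : g.1 ∈ M.verts := by
    obtain hg | ⟨e, he, f, -, -, rfl⟩ := hg
    exacts [source_mem_verts hg, source_mem_verts (e := e) he]
  have target_mem : g.2.2 ∈ M.verts := by
    obtain hg | ⟨e, -, f, hf, -, rfl⟩ := hg
    exacts [target_mem_verts hg, target_mem_verts (e := f) hf]
  rcases hv with rfl | rfl
  exacts [⟨source_mem, hgp.1⟩, ⟨target_mem, hgp.2⟩]

theorem mem_map_iff_of_injOn {f : ℕ → ℕ} {s : Set ℕ} (hf : s.InjOn f) {p : Sym2 ℕ}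
    (hp : ∀ v ∈ p, v ∈ s) {v : ℕ} (hv : v ∈ s) : f v ∈ p.map f ↔ v ∈ p := by
  rw [Sym2.mem_map]
  exact ⟨fun ⟨w, hw, h⟩ => hf (hp w hw) hv h ▸ hw, fun h => ⟨v, h, rfl⟩⟩

theorem mk_eq_map_iff_of_injOn {f : ℕ → ℕ} {s : Set ℕ} (hf : s.InjOn f) {p : Sym2 ℕ}
    (hp : ∀ v ∈ p, v ∈ s) {v w : ℕ} (hv : v ∈ s) (hw : w ∈ s) :
    s(f v, f w) = p.map f ↔ s(v, w) = p := by
  induction p with | _ a b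
  have ha := hp a (Sym2.mem_mk_left _ _)
  have hb := hp b (Sym2.mem_mk_right _ _)
  rw [Sym2.map_mk, Sym2.eq_iff, Sym2.eq_iff, hf.eq_iff hv ha, hf.eq_iff hv hb,
    hf.eq_iff hw ha, hf.eq_iff hw hb]

theorem glue_relabel {f : ℕ → ℕ} {s : Set ℕ} (hf : s.InjOn f) {p : Sym2 ℕ} (hp : ∀ v ∈ p, v ∈ s)
    {M : Pre T} (hM : M.verts ⊆ s) :
    (M.relabel f).glue (p.map f) = (M.glue p).relabel f := by
  have source_mem {e : Edge T} (he : e ∈ M.edges) := hM (source_mem_verts he)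
  have target_mem {e : Edge T} (he : e ∈ M.edges) := hM (target_mem_verts he)
  have join_relabel : join (p.map f) (M.relabel f).edges (M.relabel f).edges =
      (join p M.edges M.edges).map fun e => (f e.1, e.2.1, f e.2.2) := by
    simp only [join, relabel, Multiset.bind_map, Multiset.map_bind, Multiset.filter_map,
      Multiset.map_map]
    refine Multiset.bind_congr fun e he => Multiset.map_congr (Multiset.filter_congr ?_) ?_
    · exact fun g hg => mk_eq_map_iff_of_injOn hf hp (target_mem he) (source_mem hg)
    · exact fun g _ => rfl
  simp only [Pre.glue]
  rw [join_relabel]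
  simp only [relabel, Pre.mk.injEq, ← Multiset.map_add, Multiset.filter_map, loops,
    Multiset.map_map]
  constructor
  · congr 1
    refine Multiset.filter_congr fun g hg => ?_
    have hg : g.1 ∈ s ∧ g.2.2 ∈ s := by
      obtain hg | hg := Multiset.mem_add.1 hg
      · exact ⟨source_mem hg, target_mem hg⟩
      · obtain ⟨e, he, f, hf, -, rfl⟩ := mem_join.1 hg
        exact ⟨source_mem (e := e) he, target_mem (e := f) hf⟩
    exact and_congr (mem_map_iff_of_injOn hf hp hg.1).not (mem_map_iff_of_injOn hf hp hg.2).not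
  · congr 2
    refine Multiset.filter_congr fun e he => ?_
    exact and_congr (mem_map_iff_of_injOn hf hp (source_mem he))
      (mem_map_iff_of_injOn hf hp (target_mem he))

/-- The union of two multiwords whose points carry labels from a common set. -/
instance : AddCommMagma (Pre T) where
  add M N := ⟨M.edges + N.edges, M.singular + N.singular⟩
  add_comm _ _ := congrArg₂ Pre.mk (add_comm _ _) (add_comm _ _)

theorem edges_add (M N : Pre T) : (M + N).edges = M.edges + N.edges := rfl

theorem singular_add (M N : Pre T) : (M + N).singular = M.singular + N.singular := rfl

theorem relabel_add (f : ℕ → ℕ) (M N : Pre T) :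
    (M + N).relabel f = M.relabel f + N.relabel f :=
  congrArg₂ Pre.mk (Multiset.map_add _ _ _) rfl

theorem verts_add (M N : Pre T) : (M + N).verts = M.verts ∪ N.verts := by
  ext v
  simp only [verts, edges_add, Multiset.mem_add, Set.mem_union, Set.mem_ofPred_eq, or_and_right,
    exists_or]

theorem glue_add {p : Sym2 ℕ} {M : Pre T} (hM : ∀ v ∈ p, v ∉ M.verts) (N : Pre T) :
    (M + N).glue p = M + N.glue p := by
  have avoids {e : Edge T} (he : e ∈ M.edges) : e.Avoids p :=
    ⟨fun h => hM _ h (source_mem_verts he), fun h => hM _ h (target_mem_verts he)⟩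
  have join_left (E : Multiset (Edge T)) : join p M.edges E = 0 := by
    refine Multiset.eq_zero_of_forall_notMem fun g hg => ?_
    obtain ⟨e, he, f, -, hp, -⟩ := mem_join.1 hg
    exact (avoids he).2 (hp ▸ Sym2.mem_mk_left _ _)
  have join_right (E : Multiset (Edge T)) : join p E M.edges = 0 := by
    refine Multiset.eq_zero_of_forall_notMem fun g hg => ?_
    obtain ⟨e, -, f, hf, hp, -⟩ := mem_join.1 hg
    exact (avoids hf).1 (hp ▸ Sym2.mem_mk_right _ _)
  have loops_left : loops p M.edges = 0 := by
    rw [loops, Multiset.filter_eq_nil.2 fun e he h => (avoids he).1 h.1, Multiset.map_zero]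
  refine congrArg₂ Pre.mk ?_ ?_
  · rw [edges_add, join_add_left, join_left, zero_add, join_add_right, join_right, zero_add,
      add_assoc, Multiset.filter_add, Multiset.filter_eq_self.2 fun _ => avoids]
    rfl
  · rw [edges_add, singular_add, loops_add, loops_left, zero_add, add_assoc]
    rfl

/-- The renumbering of the remaining points when the `2 * k` points after `i` are removed. -/
def collapse (i k v : ℕ) : ℕ := if v ≤ i then v else v - 2 * k

theorem collapse_injOn (i k : ℕ) : Set.InjOn (collapse i k) (Set.Ioc i (i + 2 * k))ᶜ := by
  intro v hv w hw h
  simp only [Set.mem_compl_iff, Set.mem_Ioc, collapse] at hv hw h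
  grind

theorem contractAt_succ (i : ℕ) (M : Pre T) :
    contractAt (i + 1) M = (M.glue s(i + 1, i + 2)).relabel (collapse i 1) := by
  have link (v w : ℕ) :
      (v = i + 1 ∧ w = i + 2 ∨ v = i + 2 ∧ w = i + 1) ↔ s(v, w) = s(i + 1, i + 2) :=
    Sym2.eq_iff.symm
  have renumber (v : ℕ) : (if v < i + 1 then v else v - 2) = collapse i 1 v := by
    simp only [collapse, Nat.lt_succ_iff, mul_one]
  have avoids (v w : ℕ) : (v ≠ i + 1 ∧ v ≠ i + 2) ∧ w ≠ i + 1 ∧ w ≠ i + 2 ↔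
      v ∉ s(i + 1, i + 2) ∧ w ∉ s(i + 1, i + 2) := by
    simp only [Sym2.mem_iff, not_or, ne_eq]
  rw [contractAt, relabel, Pre.mk.injEq]
  refine ⟨?_, ?_⟩
  · simp only [renumber]
    rw [Pre.glue, Multiset.filter_add, Multiset.map_add]
    refine congrArg₂ _ (congrArg _ (Multiset.filter_congr fun e _ => avoids _ _)) ?_
    simp only [join, Multiset.filter_bind, Multiset.map_bind, Multiset.bind_filter,
      Multiset.filter_map, Multiset.map_map]
    refine Multiset.bind_congr fun e _ => ?_
    rw [Multiset.filter_filter, ite_eq_iff']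
    refine ⟨fun h => congrArg _ (Multiset.filter_congr fun f _ => ?_), fun h => ?_⟩
    · rw [link]
      exact and_congr_left' ((and_iff_right h.1).symm.trans (avoids _ _))
    · rw [Multiset.filter_eq_nil.2, Multiset.map_zero]
      rintro f - ⟨hf, he⟩
      exact h ⟨((avoids _ _).2 hf).1, Sym2.mem_iff.1 (he ▸ Sym2.mem_mk_left _ _)⟩
  · simp only [loops, Edge.IsLoop, Sym2.mem_iff, Pre.glue]

/-- Successive gluing of all pairs in the list `ps`, starting with the last one. -/
def glueAll (ps : List (Sym2 ℕ)) (M : Pre T) : Pre T := ps.foldr glue M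

theorem IsPolarized.glueAll {L : Set ℕ} {M : Pre T} (hM : IsPolarized L M) (ps : List (Sym2 ℕ)) :
    IsPolarized L (M.glueAll ps) := by
  induction ps with
  | nil => exact hM
  | cons p ps ih => exact ih.glue p

theorem verts_glueAll_subset (ps : List (Sym2 ℕ)) (M : Pre T) :
    (M.glueAll ps).verts ⊆ {v ∈ M.verts | ∀ p ∈ ps, v ∉ p} := by
  induction ps with
  | nil => exact fun v hv => ⟨hv, List.forall_mem_nil _⟩
  | cons p ps ih =>
    intro v hv
    obtain ⟨hv, hvp⟩ := verts_glue_subset p _ hv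
    exact ⟨(ih hv).1, List.forall_mem_cons.2 ⟨hvp, (ih hv).2⟩⟩

theorem glueAll_relabel {f : ℕ → ℕ} {s : Set ℕ} (hf : s.InjOn f) {ps : List (Sym2 ℕ)}
    (hps : ∀ p ∈ ps, ∀ v ∈ p, v ∈ s) {M : Pre T} (hM : M.verts ⊆ s) :
    (M.relabel f).glueAll (ps.map (Sym2.map f)) = (M.glueAll ps).relabel f := by
  induction ps with
  | nil => rfl
  | cons p ps ih =>
    rw [List.forall_mem_cons] at hps
    exact (congrArg _ (ih hps.2)).trans
      (glue_relabel hf hps.1 fun v hv => hM (verts_glueAll_subset ps M hv).1)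

theorem glueAll_add {ps : List (Sym2 ℕ)} {M : Pre T} (hM : ∀ p ∈ ps, ∀ v ∈ p, v ∉ M.verts)
    (N : Pre T) : (M + N).glueAll ps = M + N.glueAll ps := by
  induction ps with
  | nil => rfl
  | cons p ps ih =>
    rw [List.forall_mem_cons] at hM
    exact (congrArg _ (ih hM.2)).trans (glue_add hM.1 _)

theorem IsPolarized.glueAll_glue_comm {L : Set ℕ} {M : Pre T} (hM : IsPolarized L M) {p : Sym2 ℕ}
    (hp : IsOpposite L p) {qs : List (Sym2 ℕ)} (hqs : ∀ q ∈ qs, IsOpposite L q)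
    (hpqs : ∀ q ∈ qs, ∀ v ∈ q, v ∉ p) :
    (M.glue p).glueAll qs = (M.glueAll qs).glue p := by
  induction qs with
  | nil => rfl
  | cons q qs ih =>
    rw [List.forall_mem_cons] at hqs hpqs
    exact (congrArg _ (ih hqs.2 hpqs.2)).trans ((hM.glueAll qs).glue_comm hp hqs.1 hpqs.1)

theorem IsPolarized.glueAll_comm {L : Set ℕ} {M : Pre T} (hM : IsPolarized L M)
    {ps qs : List (Sym2 ℕ)} (hps : ∀ p ∈ ps, IsOpposite L p) (hqs : ∀ q ∈ qs, IsOpposite L q)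
    (hdisj : ∀ p ∈ ps, ∀ q ∈ qs, ∀ v ∈ q, v ∉ p) :
    (M.glueAll ps).glueAll qs = (M.glueAll qs).glueAll ps := by
  induction ps with
  | nil => rfl
  | cons p ps ih =>
    rw [List.forall_mem_cons] at hps hdisj
    exact ((hM.glueAll ps).glueAll_glue_comm hps.1 hqs hdisj.1).trans
      (congrArg _ (ih hps.2 hdisj.2))

/-- The pairs of points matched by the contraction at `i + Y^⊥ ⊗ Y`, where `k = |Y|`, from the
outermost pair `{i + 1, i + 2 * k}` to the innermost pair `{i + k, i + k + 1}`. -/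
def nestedPairs (i k : ℕ) : List (Sym2 ℕ) :=
  (List.range k).map fun j => s(i + 1 + j, i + 2 * k - j)

theorem exists_mem_nestedPairs_iff {i k v : ℕ} :
    (∃ p ∈ nestedPairs i k, v ∈ p) ↔ v ∈ Set.Ioc i (i + 2 * k) := by
  simp only [nestedPairs, List.mem_map, List.mem_range, exists_exists_and_eq_and, Sym2.mem_iff,
    Set.mem_Ioc]
  refine ⟨by rintro ⟨j, hj, rfl | rfl⟩ <;> omega, fun hv => ?_⟩
  rcases le_or_gt v (i + k) with h | h
  exacts [⟨v - (i + 1), by omega⟩, ⟨i + 2 * k - v, by omega⟩]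

theorem mem_Ioc_of_mem_nestedPairs {i k v : ℕ} {p : Sym2 ℕ} (hp : p ∈ nestedPairs i k)
    (hv : v ∈ p) : v ∈ Set.Ioc i (i + 2 * k) :=
  exists_mem_nestedPairs_iff.1 ⟨p, hp, hv⟩

theorem verts_glueAll_nestedPairs_subset (i k : ℕ) (M : Pre T) :
    (M.glueAll (nestedPairs i k)).verts ⊆ M.verts \ Set.Ioc i (i + 2 * k) := by
  intro v hv
  obtain ⟨hv, hvp⟩ := verts_glueAll_subset _ _ hv
  refine ⟨hv, fun h => ?_⟩
  obtain ⟨p, hp, hvp'⟩ := exists_mem_nestedPairs_iff.2 h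
  exact hvp p hp hvp'

theorem map_nestedPairs {f : ℕ → ℕ} {i i' k : ℕ}
    (hf : ∀ v ∈ Set.Ioc i (i + 2 * k), i' + v = i + f v) :
    (nestedPairs i k).map (Sym2.map f) = nestedPairs i' k := by
  simp only [nestedPairs, List.map_map]
  refine List.map_congr_left fun j hj => ?_
  rw [List.mem_range] at hj
  have hleft := hf (i + 1 + j) (by rw [Set.mem_Ioc]; omega)
  have hright := hf (i + 2 * k - j) (by rw [Set.mem_Ioc]; omega)
  rw [Function.comp_apply, Sym2.map_mk]
  congr 2
  · omega
  · omega

theorem nestedPairs_succ (i k : ℕ) : ∃ outer : List (Sym2 ℕ),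
    nestedPairs i (k + 1) = outer ++ [s(i + k + 1, i + k + 2)] ∧
      (∀ p ∈ outer, ∀ v ∈ p, v ∉ Set.Ioc (i + k) (i + k + 2)) ∧
        outer.map (Sym2.map (collapse (i + k) 1)) = nestedPairs i k := by
  refine ⟨(List.range k).map fun j => s(i + 1 + j, i + 2 * (k + 1) - j), ?_, ?_, ?_⟩
  · rw [nestedPairs, List.range_succ, List.map_append, List.map_singleton, add_right_comm i 1 k,
      show i + 2 * (k + 1) - k = i + k + 2 by omega]
  · simp only [List.mem_map, List.mem_range, Set.mem_Ioc]
    rintro _ ⟨j, hj, rfl⟩ v hv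
    rcases Sym2.mem_iff.1 hv with rfl | rfl <;> omega
  · simp only [nestedPairs, List.map_map]
    refine List.map_congr_left fun j hj => ?_
    rw [List.mem_range] at hj
    rw [Function.comp_apply, Sym2.map_mk, collapse, if_pos (by omega), collapse,
      if_neg (by omega), show i + 2 * (k + 1) - j - 2 * 1 = i + 2 * k - j by omega]

theorem contractIter_eq_relabel_glueAll (i k : ℕ) (M : Pre T) :
    contractIter i k M = (M.glueAll (nestedPairs i k)).relabel (collapse i k) := by
  induction k generalizing M with
  | zero =>
    refine (relabel_eq_self fun v _ => ?_).symm
    simp only [collapse, mul_zero, tsub_zero, ite_self, id_eq]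
  | succ k ih =>
    obtain ⟨outer, happend, hdisj, hmap⟩ := nestedPairs_succ i k
    have glueAll_succ : (M.glue s(i + k + 1, i + k + 2)).glueAll outer =
        M.glueAll (nestedPairs i (k + 1)) := by
      rw [happend, glueAll, glueAll, List.foldr_append, List.foldr_cons, List.foldr_nil]
    have verts_disjoint : (M.glue s(i + k + 1, i + k + 2)).verts ⊆
        (Set.Ioc (i + k) (i + k + 2))ᶜ := by
      intro v hv
      have hv := (verts_glue_subset _ _ hv).2
      rw [Sym2.mem_iff] at hv
      rw [Set.mem_compl_iff, Set.mem_Ioc]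
      omega
    rw [contractIter, ih, contractAt_succ, ← hmap,
      glueAll_relabel (collapse_injOn _ _) hdisj verts_disjoint, relabel_relabel, glueAll_succ]
    refine relabel_congr fun v hv => ?_
    have hv := (verts_glueAll_nestedPairs_subset _ _ _ hv).2
    simp only [Set.mem_Ioc, Function.comp_apply, collapse] at hv ⊢
    grind

theorem contractIter_comm {L : Set ℕ} {M : Pre T} (hM : IsPolarized L M) {i k l : ℕ}
    (hk : ∀ p ∈ nestedPairs i k, IsOpposite L p)
    (hl : ∀ p ∈ nestedPairs (i + 2 * k) l, IsOpposite L p) :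
    contractIter i l (contractIter i k M) = contractIter i k (contractIter (i + 2 * k) l M) := by
  have left_disj : ∀ p ∈ nestedPairs i k, ∀ v ∈ p, v ∉ Set.Ioc (i + 2 * k) (i + 2 * k + 2 * l) :=
    fun p hp v hv hv' => hv'.1.not_ge (mem_Ioc_of_mem_nestedPairs hp hv).2
  have right_disj : ∀ p ∈ nestedPairs (i + 2 * k) l, ∀ v ∈ p, v ∉ Set.Ioc i (i + 2 * k) :=
    fun p hp v hv hv' => (mem_Ioc_of_mem_nestedPairs hp hv).1.not_ge hv'.2
  have left_map : (nestedPairs i k).map (Sym2.map (collapse (i + 2 * k) l)) = nestedPairs i k :=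
    map_nestedPairs fun v hv => by rw [collapse, if_pos hv.2]
  have right_map : (nestedPairs (i + 2 * k) l).map (Sym2.map (collapse i k)) = nestedPairs i l :=
    map_nestedPairs fun v hv => by
      rw [collapse, if_neg (by have := hv.1; omega)]
      have := hv.1
      omega
  have left_then_right := glueAll_relabel (collapse_injOn i k) right_disj
    fun v hv => (verts_glueAll_nestedPairs_subset i k M hv).2
  have right_then_left := glueAll_relabel (collapse_injOn (i + 2 * k) l) left_disj
    fun v hv => (verts_glueAll_nestedPairs_subset (i + 2 * k) l M hv).2
  rw [right_map] at left_then_right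
  rw [left_map] at right_then_left
  simp only [contractIter_eq_relabel_glueAll]
  rw [left_then_right, right_then_left, relabel_relabel, relabel_relabel,
    hM.glueAll_comm hk hl fun p hp q hq v hvq hvp =>
      right_disj q hq v hvq (mem_Ioc_of_mem_nestedPairs hp hvp)]
  refine relabel_congr fun v hv => ?_
  obtain ⟨hv, hvk⟩ := verts_glueAll_nestedPairs_subset _ _ _ hv
  have hvl := (verts_glueAll_nestedPairs_subset _ _ _ hv).2
  simp only [Set.mem_Ioc, Function.comp_apply, collapse] at hvk hvl ⊢
  grind

theorem mwTensor_eq_add (c : ℕ) (M N : Pre T) : mwTensor c M N = M + N.relabel (c + ·) := rfl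

theorem forall_mem_edges_mwTensor {c : ℕ} {M N : Pre T} {P : Edge T → Prop} :
    (∀ e ∈ (mwTensor c M N).edges, P e) ↔
      (∀ e ∈ M.edges, P e) ∧ ∀ e ∈ N.edges, P (c + e.1, e.2.1, c + e.2.2) := by
  simp only [mwTensor, Multiset.mem_add, or_imp, forall_and, Multiset.forall_mem_map_iff]

theorem mwTensor_assoc (b c : ℕ) (M N P : Pre T) :
    mwTensor (b + c) (mwTensor b M N) P = mwTensor b M (mwTensor c N P) := by
  simp only [mwTensor, Multiset.map_add, Multiset.map_map, Function.comp_def, add_assoc]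

theorem mwTensor_contractIter_right {c : ℕ} {M : Pre T} (hM : M.verts ⊆ Set.Iic c) (i k : ℕ)
    (N : Pre T) :
    mwTensor c M (contractIter i k N) = contractIter (c + i) k (mwTensor c M N) := by
  have verts_disjoint : ∀ p ∈ nestedPairs (c + i) k, ∀ v ∈ p, v ∉ M.verts := fun p hp v hv hvM => by
    have hv := (mem_Ioc_of_mem_nestedPairs hp hv).1
    have hvM := Set.mem_Iic.1 (hM hvM)
    omega
  have collapse_eq_self : Set.EqOn (collapse (c + i) k) id M.verts := fun v hv => by
    rw [collapse, if_pos (le_add_right (hM hv)), id]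
  have shift_nestedPairs : (nestedPairs i k).map (Sym2.map (c + ·)) = nestedPairs (c + i) k :=
    map_nestedPairs fun v _ => by omega
  simp only [contractIter_eq_relabel_glueAll, mwTensor_eq_add]
  rw [glueAll_add verts_disjoint, relabel_add, relabel_eq_self collapse_eq_self,
    ← shift_nestedPairs, glueAll_relabel ((add_right_injective c).injOn (s := Set.univ))
    (fun _ _ _ _ => Set.mem_univ _) (Set.subset_univ _), relabel_relabel, relabel_relabel]
  refine congrArg _ (relabel_congr fun v hv => ?_)
  have hv := (verts_glueAll_nestedPairs_subset _ _ _ hv).2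
  simp only [Set.mem_Ioc, Function.comp_apply, collapse] at hv ⊢
  grind

theorem mwTensor_contractIter_left {c i : ℕ} (hi : i ≤ c) (k : ℕ) (M : Pre T) {N : Pre T}
    (hN : 0 ∉ N.verts) :
    mwTensor c (contractIter i k M) N = contractIter i k (mwTensor (c + 2 * k) M N) := by
  have ne_zero {v : ℕ} (hv : v ∈ N.verts) : v ≠ 0 := fun h => hN (h ▸ hv)
  have verts_disjoint : ∀ p ∈ nestedPairs i k, ∀ v ∈ p,
      v ∉ (N.relabel (c + 2 * k + ·)).verts := fun p hp v hv hvN => by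
    have hv := (mem_Ioc_of_mem_nestedPairs hp hv).2
    rw [verts_relabel] at hvN
    obtain ⟨w, hw, rfl⟩ := hvN
    have := ne_zero hw
    dsimp only at hv
    omega
  simp only [contractIter_eq_relabel_glueAll, mwTensor_eq_add]
  rw [add_comm M, glueAll_add verts_disjoint, relabel_add, relabel_relabel, add_comm]
  refine congrArg (· + _) (relabel_congr fun v hv => ?_)
  have := ne_zero hv
  simp only [Function.comp_apply, collapse]
  grind

end Pre

namespace Boundary

theorem tensor_assoc (X Y Z : Boundary) : (X.tensor Y).tensor Z = X.tensor (Y.tensor Z) := by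
  simp only [tensor, add_assoc, Finset.image_union, Finset.image_image, Function.comp_def,
    Finset.union_assoc]

theorem mem_tensor_left_of_le {X : Boundary} (Y : Boundary) {v : ℕ} (hv : v ≤ X.card) :
    v ∈ (X.tensor Y).left ↔ v ∈ X.left := by
  simp only [tensor, Finset.mem_union, Finset.mem_image, or_iff_left_iff_imp]
  rintro ⟨m, hm, rfl⟩
  have := (Finset.mem_Icc.1 (Y.left_sub hm)).1
  omega

theorem card_add_mem_tensor_left {X Y : Boundary} {v : ℕ} (hv : 1 ≤ v) :
    X.card + v ∈ (X.tensor Y).left ↔ v ∈ Y.left := by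
  simp only [tensor, Finset.mem_union, Finset.mem_image, add_right_inj, exists_eq_right,
    or_iff_right_iff_imp]
  intro h
  have := (Finset.mem_Icc.1 (X.left_sub h)).2
  omega

theorem sub_mem_dual_left {X : Boundary} {v : ℕ} (hv : v ∈ Set.Icc 1 X.card) :
    X.card + 1 - v ∈ X.dual.left ↔ v ∉ X.left := by
  simp only [dual, Finset.mem_image, Finset.mem_sdiff, Finset.mem_Icc]
  refine ⟨?_, fun h => ⟨v, ⟨hv, h⟩, rfl⟩⟩
  rintro ⟨w, ⟨hw, hwX⟩, h⟩
  rwa [show v = w by rw [Set.mem_Icc] at hv; omega]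

end Boundary

theorem Pre.isOpposite_of_mem_nestedPairs (A Y C : Boundary) :
    ∀ p ∈ nestedPairs A.card Y.card,
      IsOpposite (A.tensor (Y.dual.tensor (Y.tensor C))).left p := by
  intro p hp
  obtain ⟨j, hj, rfl⟩ := List.mem_map.1 hp
  rw [List.mem_range] at hj
  have right_mem : A.card + 2 * Y.card - j ∈ (A.tensor (Y.dual.tensor (Y.tensor C))).left ↔
      Y.card - j ∈ Y.left := by
    rw [show A.card + 2 * Y.card - j = A.card + (Y.dual.card + (Y.card - j)) by
      simp only [Boundary.dual]; omega, Boundary.card_add_mem_tensor_left (by omega),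
      Boundary.card_add_mem_tensor_left (by omega), Boundary.mem_tensor_left_of_le _ (by omega)]
  have left_mem : A.card + 1 + j ∈ (A.tensor (Y.dual.tensor (Y.tensor C))).left ↔
      Y.card - j ∉ Y.left := by
    rw [← Boundary.sub_mem_dual_left (Set.mem_Icc.2 (by omega)), add_assoc,
      Boundary.card_add_mem_tensor_left (by omega),
      Boundary.mem_tensor_left_of_le _ (by simp only [Boundary.dual]; omega),
      show 1 + j = Y.card + 1 - (Y.card - j) by omega]
  by_cases h : Y.card - j ∈ Y.left
  · exact ⟨_, right_mem.2 h, _, fun h' => left_mem.1 h' h, Sym2.eq_swap⟩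
  · exact ⟨_, left_mem.2 h, _, mt right_mem.1 h, rfl⟩

/-- A weak multiword with boundary `B`: the edges run from left to right points of `B`, but the
matching condition is reduced to the requirement that the target of an edge determines its
source. -/
structure IsWeakMW {T : Type} (B : Boundary) (M : Pre T) : Prop where
  verts_subset : M.verts ⊆ Set.Icc 1 B.card
  isPolarized : M.IsPolarized B.left

theorem IsMW.isWeakMW {T : Type} {B : Boundary} {M : Pre T} (hM : IsMW B M) : IsWeakMW B M where
  verts_subset := by
    rintro _ ⟨e, he, rfl | rfl⟩
    · exact Finset.mem_Icc.1 (B.left_sub (hM.1 e he).1)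
    · exact Finset.mem_Icc.1 (Finset.mem_sdiff.1 (hM.1 e he).2).1
  isPolarized.source_mem e he := (hM.1 e he).1
  isPolarized.target_notMem e he := (Finset.mem_sdiff.1 (hM.1 e he).2).2
  isPolarized.source_eq e he f hf h := by
    have hcount := hM.2 e.2.2 (Finset.mem_sdiff.1 (hM.1 e he).2).1
    rw [Multiset.countP_eq_card_filter, Multiset.card_eq_one] at hcount
    obtain ⟨g, hg⟩ := hcount
    have eq_g {e' : Edge T} (he' : e' ∈ M.edges) (ht : e'.2.2 = e.2.2) : e' = g :=
      Multiset.mem_singleton.1 (hg ▸ Multiset.mem_filter.2 ⟨he', .inr ht⟩)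
    rw [eq_g he rfl, eq_g hf h.symm]

theorem IsWeakMW.tensor {T : Type} {B C : Boundary} {M N : Pre T} (hM : IsWeakMW B M)
    (hN : IsWeakMW C N) : IsWeakMW (B.tensor C) (mwTensor B.card M N) := by
  have left {v : ℕ} (hv : v ∈ M.verts) := hM.verts_subset hv
  have right {v : ℕ} (hv : v ∈ N.verts) := hN.verts_subset hv
  refine ⟨?_, ?_, ?_, ?_⟩
  · rw [Pre.mwTensor_eq_add, Pre.verts_add, Pre.verts_relabel]
    refine Set.union_subset (fun v hv => ?_) (Set.image_subset_iff.2 fun v hv => ?_)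
    · exact ⟨(left hv).1, le_add_right (left hv).2⟩
    · exact ⟨le_add_left (right hv).1, add_le_add_right (right hv).2 _⟩
  · refine Pre.forall_mem_edges_mwTensor.2 ⟨fun e he => ?_, fun e he => ?_⟩
    · exact (Boundary.mem_tensor_left_of_le C (left (Pre.source_mem_verts he)).2).2
        (hM.isPolarized.source_mem e he)
    · exact (Boundary.card_add_mem_tensor_left (right (Pre.source_mem_verts he)).1).2
        (hN.isPolarized.source_mem e he)
  · refine Pre.forall_mem_edges_mwTensor.2 ⟨fun e he => ?_, fun e he => ?_⟩
    · exact mt (Boundary.mem_tensor_left_of_le C (left (Pre.target_mem_verts he)).2).1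
        (hM.isPolarized.target_notMem e he)
    · exact mt (Boundary.card_add_mem_tensor_left (right (Pre.target_mem_verts he)).1).1
        (hN.isPolarized.target_notMem e he)
  · have target_ne {e f : Edge T} (he : e ∈ M.edges) (hf : f ∈ N.edges) :
        e.2.2 ≠ B.card + f.2.2 := by
      have hle := (left (Pre.target_mem_verts he)).2
      have hpos := (right (Pre.target_mem_verts hf)).1
      omega
    refine Pre.forall_mem_edges_mwTensor.2
      ⟨fun e he => Pre.forall_mem_edges_mwTensor.2 ⟨fun f hf => ?_, fun f hf h => ?_⟩,
        fun e he => Pre.forall_mem_edges_mwTensor.2 ⟨fun f hf h => ?_, fun f hf h => ?_⟩⟩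
    · exact hM.isPolarized.source_eq e he f hf
    · exact (target_ne he hf h).elim
    · exact (target_ne hf he h.symm).elim
    · exact congrArg (B.card + ·) (hN.isPolarized.source_eq e he f hf (add_left_cancel h))

theorem comp_assoc_general {T : Type} (X Y Z W : Boundary) {σ τ ρ : Pre T}
    (hσ : IsWeakMW (Y.tensor X.dual) σ) (hτ : IsWeakMW (Z.tensor Y.dual) τ)
    (hρ : IsWeakMW (W.tensor Z.dual) ρ) :
    compData Y.card W.card (compData Z.card W.card ρ τ) σ =
      compData Z.card W.card ρ (compData Y.card Z.card τ σ) := by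
  have zero_notMem : 0 ∉ σ.verts := fun h => Nat.not_succ_le_zero 0 (hσ.verts_subset h).1
  have verts_le : ρ.verts ⊆ Set.Iic (W.card + Z.card) := fun v hv => (hρ.verts_subset hv).2
  have polarized := (hρ.tensor (hτ.tensor hσ)).isPolarized
  simp only [Boundary.tensor_assoc] at polarized
  have opposite_Z := Pre.isOpposite_of_mem_nestedPairs W Z (Y.dual.tensor (Y.tensor X.dual))
  have opposite_Y := Pre.isOpposite_of_mem_nestedPairs (W.tensor (Z.dual.tensor Z)) Y X.dual
  simp only [Boundary.tensor_assoc] at opposite_Y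
  have card_WZZ : (W.tensor (Z.dual.tensor Z)).card = W.card + 2 * Z.card := by
    rw [two_mul]; rfl
  rw [card_WZZ] at opposite_Y
  simp only [compData]
  rw [Pre.mwTensor_contractIter_left (Nat.le_add_right _ _) _ _ zero_notMem,
    Pre.mwTensor_contractIter_right verts_le,
    show W.card + Y.card + 2 * Z.card = W.card + Z.card + (Z.card + Y.card) by omega,
    show W.card + Z.card + Z.card = W.card + 2 * Z.card by omega, Pre.mwTensor_assoc]
  exact Pre.contractIter_comm polarized opposite_Z opposite_Y

/-- Composition of cowordisms is associative:
for `σ : X → Y`, `τ : Y → Z`, `ρ : Z → W`, `(ρ ∘ τ) ∘ σ = ρ ∘ (τ ∘ σ)`. -/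
theorem comp_assoc {T : Type} (X Y Z W : Boundary)
    (σ : Cowordism T X Y) (τ : Cowordism T Y Z) (ρ : Cowordism T Z W) :
    compData Y.card W.card (compData Z.card W.card ρ.1 τ.1) σ.1 =
      compData Z.card W.card ρ.1 (compData Y.card Z.card τ.1 σ.1) :=
  comp_assoc_general X Y Z W σ.2.isWeakMW τ.2.isWeakMW ρ.2.isWeakMW
end

section
/- The category of cowordisms over a finite alphabet T, with boundaries as objects, cowordisms as morphisms, composition by contraction, and identity cowordisms, is a category; moreover with the tensor product, the unit boundary and the symmetry cowordisms it is a symmetric monoidal category. -/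
/-!
Label the endpoints of multiwords by arbitrary labels, giving equal labels to endpoints that are to
be glued. Then contraction becomes elimination of vertices: the composite `τ ∘ σ` is obtained from
the sum of the diagrams of `τ` and `σ` by eliminating the labels of the middle boundary.
Eliminations of two vertices commute when each vertex has at most one incoming edge, since the terms
that pass through one of them twice vanish; this is associativity, and bifunctoriality holds because
eliminating vertices of one summand leaves the other alone. Eliminating along a wire, that is, an
edge carrying the empty word, only renames its endpoint, which gives the unit laws and naturality.
A multiword is determined by its diagram under an injective labelling, so these laws become
identities between sums of labelled diagrams.
-/

attribute [ext] Boundary Pre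

theorem multiset_eq_of_map_eq_map {α β : Type*} {f : α → β} {s t : Multiset α}
    (h : s.map f = t.map f) (hf : ∀ a, ∀ b ∈ t, f a = f b → a = b) : s = t := by
  obtain ht | ⟨⟨b, _⟩⟩ := isEmpty_or_nonempty {b // b ∈ t}
  · obtain rfl : t = 0 := Multiset.eq_zero_of_forall_notMem fun b hb' => ht.false ⟨b, hb'⟩
    simpa using h
  have : Nonempty α := ⟨b⟩
  have hinv : ∀ a, f a ∈ t.map f → Function.invFunOn f {b | b ∈ t} (f a) = a := fun a ha => by
    obtain ⟨b, hb, hab⟩ := Multiset.mem_map.1 ha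
    have hex : ∃ c ∈ {b | b ∈ t}, f c = f a := ⟨b, hb, hab⟩
    exact (hf a _ (Function.invFunOn_mem hex) (Function.invFunOn_eq hex).symm).symm
  calc s = (s.map f).map (Function.invFunOn f {b | b ∈ t}) := by
        rw [Multiset.map_map]
        exact (Multiset.map_id' s).symm.trans (Multiset.map_congr rfl fun a ha =>
          (hinv a (h ▸ Multiset.mem_map_of_mem f ha)).symm)
    _ = (t.map f).map (Function.invFunOn f {b | b ∈ t}) := by rw [h]
    _ = t := by
        rw [Multiset.map_map]
        exact (Multiset.map_congr rfl fun a ha => hinv a (Multiset.mem_map_of_mem f ha)).trans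
          (Multiset.map_id' t)

theorem eq_and_eq_of_add_eq_add {α : Type*} {p : α → Prop} {s s' t t' : Multiset α}
    (h : s + t = s' + t') (hs : ∀ a ∈ s, p a) (ht : ∀ a ∈ t, ¬ p a) (hs' : ∀ a ∈ s', p a)
    (ht' : ∀ a ∈ t', ¬ p a) : s = s' ∧ t = t' := by
  classical
  obtain rfl : s = s' := by
    simpa [Multiset.filter_eq_self.2 hs, Multiset.filter_eq_self.2 hs', Multiset.filter_eq_nil.2 ht,
      Multiset.filter_eq_nil.2 ht'] using congrArg (Multiset.filter p) h
  exact ⟨rfl, add_left_cancel h⟩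

theorem eq_one_and_eq_of_add_replicate_eq_cons {α : Type*} {v : α} {s t : Multiset α} {n : ℕ}
    (h : s + Multiset.replicate n v = v ::ₘ t) (hs : v ∉ s) (ht : v ∉ t) : n = 1 ∧ s = t := by
  classical
  obtain rfl : n = 1 := by
    simpa [Multiset.count_eq_zero_of_notMem, hs, ht] using congrArg (Multiset.count v) h
  exact ⟨rfl, by simpa [Multiset.add_cons, add_comm s] using h⟩

theorem union_val_of_disjoint {α : Type*} [DecidableEq α] {s t : Finset α} (h : Disjoint s t) :
    (s ∪ t).val = s.val + t.val := by
  rw [← Finset.disjUnion_eq_union _ _ h, Finset.disjUnion_val]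

theorem disjoint_image_add_left {n : ℕ} {s t : Finset ℕ} (hs : s ⊆ Finset.Icc 1 n)
    (ht : ∀ m ∈ t, 1 ≤ m) : Disjoint s (t.image (n + ·)) := by
  refine Finset.disjoint_left.2 fun m hm hm' => ?_
  obtain ⟨l, hl, rfl⟩ := Finset.mem_image.1 hm'
  have := Finset.mem_Icc.1 (hs hm)
  have := ht l hl
  omega

section Update

variable {α β : Type*} [DecidableEq α]

theorem mem_and_ne_of_mem_map_update {s : Multiset α} {v w x : α}
    (h : v ∈ s.map (Function.update id w x)) (hx : x ≠ v) : v ∈ s ∧ v ≠ w := by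
  obtain ⟨u, hu, huv⟩ := Multiset.mem_map.1 h
  obtain rfl | hne := eq_or_ne u w
  · exact absurd (by simpa using huv) hx
  · obtain rfl : u = v := by simpa [hne] using huv
    exact ⟨hu, hne⟩

theorem extend_comp_update {a b : β → α} (hb : Function.Injective b) (hab : ∀ m m', a m ≠ b m')
    (m : β) :
    Function.extend b a id ∘ Function.update id (b m) (a m) = Function.extend b a id := by
  funext w
  obtain rfl | hne := eq_or_ne w (b m)
  · have hrange : ¬ ∃ m', b m' = a m := fun ⟨m', h⟩ => hab m m' h.symm
    simp [hb.extend_apply, hrange]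
  · simp [hne]

end Update

/-! ### Diagrams -/

/-- A multiset of edges `(source, word, target)`, with sources and targets in an arbitrary type of
labels, together with a multiset of cyclic words. Multiwords are diagrams labelled by numbers;
relabelling their endpoints arbitrarily avoids the index arithmetic of contraction. -/
@[ext]
structure Diagram (α : Type*) (T : Type) where
  edges : Multiset (α × List T × α)
  cycles : Multiset (CyclicWord T)

namespace Diagram

variable {α β γ : Type*} {T : Type}

instance : Zero (Diagram α T) := ⟨⟨0, 0⟩⟩

instance : Add (Diagram α T) := ⟨fun M N => ⟨M.edges + N.edges, M.cycles + N.cycles⟩⟩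

@[simp] theorem edges_add (M N : Diagram α T) : (M + N).edges = M.edges + N.edges := rfl

@[simp] theorem cycles_add (M N : Diagram α T) : (M + N).cycles = M.cycles + N.cycles := rfl

instance : AddCommMonoid (Diagram α T) where
  add_assoc _ _ _ := Diagram.ext (add_assoc _ _ _) (add_assoc _ _ _)
  zero_add _ := Diagram.ext (zero_add _) (zero_add _)
  add_zero _ := Diagram.ext (add_zero _) (add_zero _)
  add_comm _ _ := Diagram.ext (add_comm _ _) (add_comm _ _)
  nsmul := nsmulRec

/-- The labels at which edges of `M` start, with multiplicity. -/
def sources (M : Diagram α T) : Multiset α := M.edges.map fun e => e.1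

/-- The labels at which edges of `M` end, with multiplicity. -/
def targets (M : Diagram α T) : Multiset α := M.edges.map fun e => e.2.2

/-- The labels of the endpoints of the edges of `M`; the multiplicity of a label is its degree. -/
def vertices (M : Diagram α T) : Multiset α := M.sources + M.targets

@[simp] theorem sources_add (M N : Diagram α T) :
    (M + N).sources = M.sources + N.sources := Multiset.map_add _ _ _

@[simp] theorem targets_add (M N : Diagram α T) :
    (M + N).targets = M.targets + N.targets := Multiset.map_add _ _ _

theorem vertices_add (M N : Diagram α T) :
    (M + N).vertices = M.vertices + N.vertices := by
  simp only [vertices, sources_add, targets_add]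
  abel

theorem notMem_vertices_add {M N : Diagram α T} {v : α} (hM : v ∉ M.vertices)
    (hN : v ∉ N.vertices) : v ∉ (M + N).vertices := by
  rw [vertices_add]
  exact fun h => (Multiset.mem_add.1 h).elim hM hN

theorem fst_mem_sources {M : Diagram α T} {e : α × List T × α} (he : e ∈ M.edges) :
    e.1 ∈ M.sources := Multiset.mem_map_of_mem _ he

theorem snd_mem_targets {M : Diagram α T} {e : α × List T × α} (he : e ∈ M.edges) :
    e.2.2 ∈ M.targets := Multiset.mem_map_of_mem (fun e : α × List T × α => e.2.2) he

theorem count_vertices [DecidableEq α] {M : Diagram α T} (hM : ∀ e ∈ M.edges, e.1 ≠ e.2.2)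
    (v : α) : M.vertices.count v = M.edges.countP fun e => e.1 = v ∨ e.2.2 = v := by
  have hloop : M.edges.filter (fun e => e.1 = v ∧ e.2.2 = v) = 0 :=
    Multiset.filter_eq_nil.2 fun e he h => hM e he (h.1.trans h.2.symm)
  have hor := Multiset.filter_add_filter (fun e : α × List T × α => e.1 = v)
    (fun e => e.2.2 = v) M.edges
  rw [hloop, add_zero] at hor
  rw [vertices, Multiset.count_add, Multiset.countP_eq_card_filter, ← hor, Multiset.card_add]
  simp only [Multiset.count, sources, targets, Multiset.countP_map, eq_comm]

/-- The diagram obtained by applying `f` to all endpoints. When `f` is not injective, this glues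
vertices without contracting anything. -/
def relabel (f : α → β) (M : Diagram α T) : Diagram β T where
  edges := M.edges.map (Prod.map f (Prod.map id f))
  cycles := M.cycles

theorem edges_relabel (f : α → β) (M : Diagram α T) :
    (M.relabel f).edges = M.edges.map (Prod.map f (Prod.map id f)) := rfl

@[simp] theorem cycles_relabel (f : α → β) (M : Diagram α T) :
    (M.relabel f).cycles = M.cycles := rfl

@[simp] theorem sources_relabel (f : α → β) (M : Diagram α T) :
    (M.relabel f).sources = M.sources.map f := by
  simp [sources, relabel]

@[simp] theorem targets_relabel (f : α → β) (M : Diagram α T) :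
    (M.relabel f).targets = M.targets.map f := by
  simp [targets, relabel]

theorem vertices_relabel (f : α → β) (M : Diagram α T) :
    (M.relabel f).vertices = M.vertices.map f := by
  simp [vertices]

theorem relabel_add (f : α → β) (M N : Diagram α T) :
    (M + N).relabel f = M.relabel f + N.relabel f :=
  Diagram.ext (Multiset.map_add _ _ _) rfl

theorem relabel_relabel (g : β → γ) (f : α → β) (M : Diagram α T) :
    (M.relabel f).relabel g = M.relabel (g ∘ f) := by
  simp [relabel, Prod.map]

theorem relabel_congr {f g : α → β} {M : Diagram α T} (h : ∀ v ∈ M.vertices, f v = g v) :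
    M.relabel f = M.relabel g := by
  refine Diagram.ext (Multiset.map_congr rfl fun e he => ?_) rfl
  have h₁ := h e.1 (Multiset.mem_add.2 (.inl (fst_mem_sources he)))
  have h₂ := h e.2.2 (Multiset.mem_add.2 (.inr (snd_mem_targets he)))
  simp [Prod.map, h₁, h₂]

theorem relabel_eq_self {f : α → α} {M : Diagram α T} (h : ∀ v ∈ M.vertices, f v = v) :
    M.relabel f = M := by
  rw [relabel_congr (g := id) h]
  exact Diagram.ext (Multiset.map_id _) rfl

theorem eq_of_relabel_eq {f : α → β} {M N : Diagram α T} (h : M.relabel f = N.relabel f)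
    (hf : ∀ u, ∀ v ∈ N.vertices, f u = f v → u = v) : M = N := by
  obtain ⟨hedges, hcycles⟩ := Diagram.ext_iff.1 h
  refine Diagram.ext (multiset_eq_of_map_eq_map hedges ?_) hcycles
  rintro ⟨a, u, b⟩ ⟨a', u', b'⟩ he hee
  simp only [Prod.map_apply, id, Prod.mk.injEq] at hee ⊢
  exact ⟨hf _ _ (Multiset.mem_add.2 (.inl (fst_mem_sources he))) hee.1, hee.2.1,
    hf _ _ (Multiset.mem_add.2 (.inr (snd_mem_targets he))) hee.2.2⟩

/-- All concatenations of an edge of `A` with an edge of `B`, whether or not the target of the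
former is the source of the latter. -/
def concat (A B : Multiset (α × List T × α)) : Multiset (α × List T × α) :=
  A.bind fun e => B.map fun f => (e.1, e.2.1 ++ f.2.1, f.2.2)

local infixl:70 " ⋆ " => concat

variable (A B C : Multiset (α × List T × α))

@[simp] theorem zero_concat : 0 ⋆ A = 0 := Multiset.zero_bind _

@[simp] theorem concat_zero : A ⋆ 0 = 0 := by simp [concat]

theorem add_concat : (A + B) ⋆ C = A ⋆ C + B ⋆ C := Multiset.add_bind _ _ _

theorem concat_add : A ⋆ (B + C) = A ⋆ B + A ⋆ C := by simp [concat]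

theorem concat_assoc : A ⋆ B ⋆ C = A ⋆ (B ⋆ C) := by
  simp [concat, Multiset.bind_assoc, Multiset.bind_map, Multiset.map_bind]

theorem map_fst_concat : (A ⋆ B).map (fun e => e.1) = B.card • A.map fun e => e.1 := by
  induction A using Multiset.induction_on with
  | empty => simp
  | cons e A ih =>
    rw [← Multiset.singleton_add, add_concat, Multiset.map_add, ih, Multiset.map_add, smul_add]
    simp [concat, Multiset.nsmul_singleton]

theorem map_snd_concat : (A ⋆ B).map (fun e => e.2.2) = A.card • B.map fun e => e.2.2 := by
  induction A using Multiset.induction_on with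
  | empty => simp
  | cons e A ih =>
    rw [← Multiset.singleton_add, add_concat, Multiset.map_add, ih, Multiset.card_add, add_smul]
    simp [concat]

theorem filter_concat (p q : α → Prop) [DecidablePred p] [DecidablePred q] :
    (A ⋆ B).filter (fun e => p e.1 ∧ q e.2.2) =
      A.filter (fun e => p e.1) ⋆ B.filter (fun e => q e.2.2) := by
  induction A using Multiset.induction_on with
  | empty => simp
  | cons e A ih =>
    rw [← Multiset.singleton_add, add_concat, Multiset.filter_add, ih, Multiset.filter_add,
      add_concat]
    congr 1
    by_cases he : p e.1 <;> simp [concat, Multiset.filter_singleton, Multiset.filter_map, he]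

theorem map_relabel_concat (f : α → β) :
    (A ⋆ B).map (Prod.map f (Prod.map id f)) =
      A.map (Prod.map f (Prod.map id f)) ⋆ B.map (Prod.map f (Prod.map id f)) := by
  simp [concat, Multiset.map_bind, Multiset.bind_map]

/-- The cyclic word a closed edge contracts to. -/
def closure (e : α × List T × α) : CyclicWord T := Quot.mk _ e.2.1

theorem map_closure_concat_comm : (A ⋆ B).map closure = (B ⋆ A).map closure := by
  simp only [concat, Multiset.map_bind, Multiset.map_map, Function.comp_def]
  rw [Multiset.bind_map_comm]
  exact Multiset.bind_congr fun e _ => Multiset.map_congr rfl fun f _ =>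
    Quot.sound ⟨_, _, rfl, rfl⟩

open Classical in
/-- The edges of `M` that run from `S` to `R`. -/
noncomputable def between (S R : Set α) (M : Diagram α T) : Multiset (α × List T × α) :=
  M.edges.filter fun e => e.1 ∈ S ∧ e.2.2 ∈ R

theorem mem_between {S R : Set α} {M : Diagram α T} {e : α × List T × α} :
    e ∈ M.between S R ↔ e ∈ M.edges ∧ e.1 ∈ S ∧ e.2.2 ∈ R := by
  classical exact Multiset.mem_filter

theorem between_add (S R : Set α) (M N : Diagram α T) :
    (M + N).between S R = M.between S R + N.between S R := by
  classical exact Multiset.filter_add _ _ _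

theorem between_relabel (S R : Set β) (f : α → β) (M : Diagram α T) :
    (M.relabel f).between S R =
      (M.between (f ⁻¹' S) (f ⁻¹' R)).map (Prod.map f (Prod.map id f)) := by
  classical exact Multiset.filter_map _ _ _

theorem between_eq_filter_filter (S R : Set α) [DecidablePred (· ∈ S)] [DecidablePred (· ∈ R)]
    (M : Diagram α T) :
    M.between S R = (M.edges.filter fun e => e.1 ∈ S).filter fun e => e.2.2 ∈ R := by
  rw [Multiset.filter_filter, between]
  simp only [and_comm]
  congr!

theorem between_eq_zero {S R : Set α} {M : Diagram α T}
    (h : ∀ e ∈ M.edges, e.1 ∈ S → e.2.2 ∉ R) : M.between S R = 0 :=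
  Multiset.eq_zero_of_forall_notMem fun e he =>
    h e (mem_between.1 he).1 (mem_between.1 he).2.1 (mem_between.1 he).2.2

theorem between_eq_edges {S R : Set α} {M : Diagram α T}
    (h : ∀ e ∈ M.edges, e.1 ∈ S ∧ e.2.2 ∈ R) : M.between S R = M.edges := by
  classical exact Multiset.filter_eq_self.2 h

theorem edges_eq_between_add (S : Set α) (M : Diagram α T) :
    M.edges = M.between Sᶜ Sᶜ + M.between Sᶜ S + (M.between S Sᶜ + M.between S S) := by
  classical
  have hsource := Multiset.filter_add_not (fun e => e.1 ∈ S) M.edges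
  have htarget (A : Multiset (α × List T × α)) :=
    (add_comm _ _).trans (Multiset.filter_add_not (fun e => e.2.2 ∈ S) A)
  simp only [between_eq_filter_filter, Set.mem_compl_iff, htarget]
  rw [add_comm, hsource]

theorem map_fst_between_singleton (v : α) (S : Set α) (M : Diagram α T) :
    (M.between {v} S).map (fun e => e.1) = Multiset.replicate (M.between {v} S).card v := by
  rw [← Multiset.map_const']
  exact Multiset.map_congr rfl fun e he => (mem_between.1 he).2.1

theorem map_snd_between_singleton (v : α) (S : Set α) (M : Diagram α T) :
    (M.between S {v}).map (fun e => e.2.2) = Multiset.replicate (M.between S {v}).card v := by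
  rw [← Multiset.map_const']
  exact Multiset.map_congr rfl fun e he => (mem_between.1 he).2.2

theorem sources_eq_add_replicate (v : α) (M : Diagram α T) :
    M.sources = (M.between {v}ᶜ {v}ᶜ).map (fun e => e.1) +
        (M.between {v}ᶜ {v}).map (fun e => e.1) +
      Multiset.replicate ((M.between {v} {v}ᶜ).card + (M.between {v} {v}).card) v := by
  rw [sources, M.edges_eq_between_add {v}]
  simp only [Multiset.map_add, map_fst_between_singleton, Multiset.replicate_add]

theorem targets_eq_add_replicate (v : α) (M : Diagram α T) :
    M.targets = (M.between {v}ᶜ {v}ᶜ).map (fun e => e.2.2) +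
        (M.between {v} {v}ᶜ).map (fun e => e.2.2) +
      Multiset.replicate ((M.between {v}ᶜ {v}).card + (M.between {v} {v}).card) v := by
  rw [targets, M.edges_eq_between_add {v}]
  simp only [Multiset.map_add, map_snd_between_singleton, Multiset.replicate_add]
  abel

/-! ### Elimination of vertices -/

/-- Contraction of `S` to a point, followed by elimination of that point: every edge entering
`S` is joined to every edge leaving `S`, and every edge inside `S` is closed. This is elementary
contraction when `S` consists of two adjacent points of a multiword, and is meant for sets `S` such
that at most one edge enters `S` and at most one leaves it. -/
noncomputable def elim (S : Set α) (M : Diagram α T) : Diagram α T where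
  edges := M.between Sᶜ Sᶜ + M.between Sᶜ S ⋆ M.between S Sᶜ
  cycles := M.cycles + (M.between S S).map closure

theorem edges_elim (S : Set α) (M : Diagram α T) :
    (M.elim S).edges = M.between Sᶜ Sᶜ + M.between Sᶜ S ⋆ M.between S Sᶜ := rfl

theorem cycles_elim (S : Set α) (M : Diagram α T) :
    (M.elim S).cycles = M.cycles + (M.between S S).map closure := rfl

theorem elim_relabel (S : Set β) (f : α → β) (M : Diagram α T) :
    (M.relabel f).elim S = (M.elim (f ⁻¹' S)).relabel f := by
  refine Diagram.ext ?_ ?_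
  · simp only [edges_elim, between_relabel, edges_relabel, map_relabel_concat, Multiset.map_add,
      Set.preimage_compl]
  · simp only [cycles_elim, between_relabel, cycles_relabel, Multiset.map_map]
    rfl

theorem between_elim (S R U : Set α) (M : Diagram α T) :
    (M.elim U).between S R =
      M.between (S \ U) (R \ U) + M.between (S \ U) U ⋆ M.between U (R \ U) := by
  classical
  simp only [between, edges_elim, Multiset.filter_add, filter_concat, Multiset.filter_filter,
    Set.mem_sdiff, Set.mem_compl_iff, and_assoc, and_left_comm]

theorem elim_add {S : Set α} {M N : Diagram α T} (hN : ∀ v ∈ S, v ∉ N.vertices) :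
    (M + N).elim S = M.elim S + N := by
  have hs : ∀ e ∈ N.edges, e.1 ∉ S := fun e he h =>
    hN _ h (Multiset.mem_add.2 (.inl (fst_mem_sources he)))
  have ht : ∀ e ∈ N.edges, e.2.2 ∉ S := fun e he h =>
    hN _ h (Multiset.mem_add.2 (.inr (snd_mem_targets he)))
  have hcc : N.between Sᶜ Sᶜ = N.edges := between_eq_edges fun e he => ⟨hs e he, ht e he⟩
  have htgt (R : Set α) : N.between R S = 0 := between_eq_zero fun e he _ => ht e he
  have hsrc (R : Set α) : N.between S R = 0 := between_eq_zero fun e he h => absurd h (hs e he)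
  refine Diagram.ext ?_ ?_
  · simp only [edges_elim, between_add, hcc, htgt, hsrc, edges_add, add_zero]
    abel
  · simp only [cycles_elim, between_add, htgt, cycles_add, add_zero]
    abel

theorem sources_elim (S : Set α) (M : Diagram α T) :
    (M.elim S).sources = (M.between Sᶜ Sᶜ).map (fun e => e.1) +
      (M.between S Sᶜ).card • (M.between Sᶜ S).map fun e => e.1 := by
  rw [sources, edges_elim, Multiset.map_add, map_fst_concat]

theorem targets_elim (S : Set α) (M : Diagram α T) :
    (M.elim S).targets = (M.between Sᶜ Sᶜ).map (fun e => e.2.2) +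
      (M.between Sᶜ S).card • (M.between S Sᶜ).map fun e => e.2.2 := by
  rw [targets, edges_elim, Multiset.map_add, map_snd_concat]

theorem sources_elim_subset (S : Set α) (M : Diagram α T) :
    (M.elim S).sources ⊆ M.sources := by
  have hsub (R Q : Set α) : (M.between R Q).map (fun e => e.1) ⊆ M.sources :=
    Multiset.map_subset_map fun e he => (mem_between.1 he).1
  rw [sources_elim]
  exact fun v hv => (Multiset.mem_add.1 hv).elim (hsub _ _ ·)
    fun h => hsub _ _ (Multiset.mem_of_mem_nsmul h)

theorem targets_elim_subset (S : Set α) (M : Diagram α T) :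
    (M.elim S).targets ⊆ M.targets := by
  have hsub (R Q : Set α) : (M.between R Q).map (fun e => e.2.2) ⊆ M.targets :=
    Multiset.map_subset_map fun e he => (mem_between.1 he).1
  rw [targets_elim]
  exact fun v hv => (Multiset.mem_add.1 hv).elim (hsub _ _ ·)
    fun h => hsub _ _ (Multiset.mem_of_mem_nsmul h)

theorem between_singleton_eq_zero_or {M : Diagram α T} (hM : M.targets.Nodup) {S R : Set α}
    (hSR : Disjoint S R) (v : α) : M.between S {v} = 0 ∨ M.between R {v} = 0 := by
  by_contra! h
  obtain ⟨e, he⟩ := Multiset.exists_mem_of_ne_zero h.1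
  obtain ⟨f, hf⟩ := Multiset.exists_mem_of_ne_zero h.2
  obtain ⟨he, heS, hev⟩ := mem_between.1 he
  obtain ⟨hf, hfR, hfv⟩ := mem_between.1 hf
  obtain rfl : e = f := Multiset.inj_on_of_nodup_map hM e he f hf (hev.trans hfv.symm)
  exact Set.disjoint_left.1 hSR heS hfR

theorem elim_singleton_comm {M : Diagram α T} (hM : M.targets.Nodup) (v w : α) :
    (M.elim {v}).elim {w} = (M.elim {w}).elim {v} := by
  obtain rfl | hvw := eq_or_ne v w
  · rfl
  have hv : ({v} : Set α) \ {w} = {v} := by simpa using hvw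
  have hw : ({w} : Set α) \ {v} = {w} := by simpa using hvw.symm
  have hc : ({w}ᶜ : Set α) \ {v} = {v}ᶜ \ {w} := by
    ext
    simp [and_comm]
  set o : Set α := {v}ᶜ \ {w} with ho
  have hvow : M.between o {v} ⋆ M.between {v} {w} ⋆ M.between {w} {v} = 0 := by
    obtain h | h := between_singleton_eq_zero_or hM (S := o) (R := {w}) Set.disjoint_sdiff_left v
    <;> simp [h]
  have hwov : M.between o {w} ⋆ M.between {w} {v} ⋆ M.between {v} {w} = 0 := by
    obtain h | h := between_singleton_eq_zero_or hM (S := o) (R := {v})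
      (Set.disjoint_left.2 fun _ h => h.1) w <;> simp [h]
  refine Diagram.ext ?_ ?_
  · simp only [edges_elim {v}, edges_elim {w}, between_elim, hv, hw, hc, ← ho, concat_add,
      add_concat, ← concat_assoc, hvow, hwov, zero_concat]
    abel
  · simp only [cycles_elim, between_elim, hv, hw, Multiset.map_add,
      map_closure_concat_comm (M.between {v} {w})]
    abel

theorem targets_elim_singleton_le {M : Diagram α T} (hM : M.targets.Nodup) (v : α) :
    (M.elim {v}).targets ≤ M.targets := by
  classical
  have hcard : (M.between {v}ᶜ {v}).card ≤ 1 := by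
    have := Multiset.nodup_iff_count_le_one.1 hM v
    rw [targets_eq_add_replicate v, Multiset.count_add, Multiset.count_replicate_self] at this
    omega
  rw [targets_elim, targets_eq_add_replicate v M]
  refine le_add_right (add_le_add_right ?_ _)
  simpa using nsmul_le_nsmul_left (Multiset.zero_le _) hcard

theorem sources_targets_elim_singleton {M : Diagram α T} {v : α} {S R : Multiset α}
    (hs : M.sources = v ::ₘ S) (hS : v ∉ S) (ht : M.targets = v ::ₘ R) (hR : v ∉ R) :
    (M.elim {v}).sources = S ∧ (M.elim {v}).targets = R := by
  have hfst (Q : Set α) : v ∉ (M.between {v}ᶜ Q).map fun e => e.1 := fun h => by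
    obtain ⟨e, he, rfl⟩ := Multiset.mem_map.1 h
    exact (mem_between.1 he).2.1 rfl
  have hsnd (Q : Set α) : v ∉ (M.between Q {v}ᶜ).map fun e => e.2.2 := fun h => by
    obtain ⟨e, he, rfl⟩ := Multiset.mem_map.1 h
    exact (mem_between.1 he).2.2 rfl
  obtain ⟨hout, hS⟩ := eq_one_and_eq_of_add_replicate_eq_cons
    ((sources_eq_add_replicate v M).symm.trans hs)
    (fun h => (Multiset.mem_add.1 h).elim (hfst _) (hfst _)) hS
  obtain ⟨hin, hR⟩ := eq_one_and_eq_of_add_replicate_eq_cons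
    ((targets_eq_add_replicate v M).symm.trans ht)
    (fun h => (Multiset.mem_add.1 h).elim (hsnd _) (hsnd _)) hR
  rw [sources_elim, targets_elim, ← hS, ← hR]
  obtain h | h : (M.between {v} {v}).card = 1 ∨ (M.between {v} {v}).card = 0 := by omega
  · have hvo : M.between {v} {v}ᶜ = 0 := Multiset.card_eq_zero.1 (by omega)
    have hov : M.between {v}ᶜ {v} = 0 := Multiset.card_eq_zero.1 (by omega)
    simp [hvo, hov]
  · have hvo : (M.between {v} {v}ᶜ).card = 1 := by omega
    have hov : (M.between {v}ᶜ {v}).card = 1 := by omega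
    simp [hvo, hov]

/-- Successive elimination of the vertices in a list, from head to tail. -/
noncomputable def eliminate (l : List α) (M : Diagram α T) : Diagram α T :=
  l.foldl (fun M v => M.elim {v}) M

@[simp] theorem eliminate_nil (M : Diagram α T) : M.eliminate [] = M := rfl

@[simp] theorem eliminate_cons (v : α) (l : List α) (M : Diagram α T) :
    M.eliminate (v :: l) = (M.elim {v}).eliminate l := rfl

theorem eliminate_append (l l' : List α) (M : Diagram α T) :
    M.eliminate (l ++ l') = (M.eliminate l).eliminate l' := List.foldl_append

theorem eliminate_perm {l l' : List α} (h : l.Perm l') {M : Diagram α T}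
    (hM : M.targets.Nodup) : M.eliminate l = M.eliminate l' := by
  induction h generalizing M with
  | nil => rfl
  | cons v _ ih => exact ih (Multiset.nodup_of_le (targets_elim_singleton_le hM v) hM)
  | swap v w l => simp only [eliminate_cons, elim_singleton_comm hM v w]
  | trans _ _ ih₁ ih₂ => exact (ih₁ hM).trans (ih₂ hM)

theorem vertices_elim_subset (S : Set α) (M : Diagram α T) :
    (M.elim S).vertices ⊆ M.vertices := fun _ hv =>
  Multiset.mem_add.2 ((Multiset.mem_add.1 hv).imp (sources_elim_subset S M ·)
    (targets_elim_subset S M ·))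

theorem vertices_eliminate_subset (l : List α) (M : Diagram α T) :
    (M.eliminate l).vertices ⊆ M.vertices := by
  induction l generalizing M with
  | nil => exact Multiset.Subset.refl _
  | cons v l ih => exact Multiset.Subset.trans (ih _) (vertices_elim_subset _ M)

theorem eliminate_add {l : List α} {M N : Diagram α T} (hN : ∀ v ∈ l, v ∉ N.vertices) :
    (M + N).eliminate l = M.eliminate l + N := by
  induction l generalizing M with
  | nil => rfl
  | cons v l ih =>
    rw [eliminate_cons, elim_add (by simpa using hN v List.mem_cons_self),
      ih fun w hw => hN w (List.mem_cons_of_mem v hw), eliminate_cons]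

theorem eliminate_append_add {l l' : List α} {M N : Diagram α T}
    (hM : ∀ v ∈ l', v ∉ M.vertices) (hN : ∀ v ∈ l, v ∉ N.vertices) :
    (M + N).eliminate (l ++ l') = M.eliminate l + N.eliminate l' := by
  rw [eliminate_append, eliminate_add hN, add_comm,
    eliminate_add fun v hv h => hM v hv (vertices_eliminate_subset l M h), add_comm]

theorem eliminate_append_add_add {l l' : List α} {A A' B B' : Diagram α T}
    (hA : ∀ v ∈ l', v ∉ A.vertices) (hA' : ∀ v ∈ l, v ∉ A'.vertices)
    (hB : ∀ v ∈ l', v ∉ B.vertices) (hB' : ∀ v ∈ l, v ∉ B'.vertices) :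
    (A + A' + (B + B')).eliminate (l ++ l') =
      (A + B).eliminate l + (A' + B').eliminate l' := by
  rw [add_add_add_comm, eliminate_append_add
    (fun v hv => notMem_vertices_add (hA v hv) (hB v hv))
    fun v hv => notMem_vertices_add (hA' v hv) (hB' v hv)]

theorem sources_targets_eliminate {l : List α} {M : Diagram α T} {S R : Multiset α}
    (hl : l.Nodup) (hs : M.sources = (l : Multiset α) + S) (hS : ∀ v ∈ l, v ∉ S)
    (ht : M.targets = (l : Multiset α) + R) (hR : ∀ v ∈ l, v ∉ R) :
    (M.eliminate l).sources = S ∧ (M.eliminate l).targets = R := by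
  induction l generalizing M with
  | nil => simpa using And.intro hs ht
  | cons v l ih =>
    obtain ⟨hv, hl⟩ := List.nodup_cons.1 hl
    have hvS : v ∉ (l : Multiset α) + S := by simp [hv, hS v List.mem_cons_self]
    have hvR : v ∉ (l : Multiset α) + R := by simp [hv, hR v List.mem_cons_self]
    obtain ⟨hs', ht'⟩ := sources_targets_elim_singleton
      (hs.trans (Multiset.cons_add v l S)) hvS (ht.trans (Multiset.cons_add v l R)) hvR
    exact ih hl hs' (fun w hw => hS w (List.mem_cons_of_mem v hw)) ht'
      fun w hw => hR w (List.mem_cons_of_mem v hw)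

/-! ### Wires -/

/-- The diagram with a single edge, from `s` to `t`, carrying the empty word. -/
def wire (T : Type) (s t : α) : Diagram α T := ⟨{(s, [], t)}, 0⟩

/-- Empty-word edges from `a m` to `b m` for `m ∈ L` and from `b m` to `a m` for `m ∈ R`: the
common shape of identities and symmetries, with `L` and `R` the left and right endpoints of a
boundary. -/
def wires (T : Type) (L R : Multiset β) (a b : β → α) : Diagram α T where
  edges := L.map (fun m => (a m, [], b m)) + R.map fun m => (b m, [], a m)
  cycles := 0

theorem wires_swap (L R : Multiset β) (a b : β → α) : wires T L R a b = wires T R L b a :=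
  Diagram.ext (add_comm _ _) rfl

theorem sources_wires (L R : Multiset β) (a b : β → α) :
    (wires T L R a b).sources = L.map a + R.map b := by
  simp [sources, wires]

theorem targets_wires (L R : Multiset β) (a b : β → α) :
    (wires T L R a b).targets = L.map b + R.map a := by
  simp [targets, wires]

theorem wires_cons_left (m : β) (L R : Multiset β) (a b : β → α) :
    wires T (m ::ₘ L) R a b = wire T (a m) (b m) + wires T L R a b :=
  Diagram.ext (by simp [wires, wire]) rfl

theorem wires_add (L L' R R' : Multiset β) (a b : β → α) :
    wires T (L + L') (R + R') a b = wires T L R a b + wires T L' R' a b := by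
  refine Diagram.ext ?_ rfl
  simp only [wires, Multiset.map_add, edges_add]
  abel

theorem wires_map (f : γ → β) (L R : Multiset γ) (a b : β → α) :
    wires T (L.map f) (R.map f) a b = wires T L R (a ∘ f) (b ∘ f) :=
  Diagram.ext (by simp [wires]) rfl

theorem relabel_wires (f : α → γ) (L R : Multiset β) (a b : β → α) :
    (wires T L R a b).relabel f = wires T L R (f ∘ a) (f ∘ b) :=
  Diagram.ext (by simp [wires, relabel]) rfl

theorem wires_congr {L R : Multiset β} {a a' b b' : β → α} (ha : ∀ m ∈ L + R, a m = a' m)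
    (hb : ∀ m ∈ L + R, b m = b' m) : wires T L R a b = wires T L R a' b' := by
  simp only [Multiset.mem_add] at ha hb
  refine Diagram.ext (congrArg₂ (· + ·) ?_ ?_) rfl <;>
    refine Multiset.map_congr rfl fun m hm => ?_
  · rw [ha m (.inl hm), hb m (.inl hm)]
  · rw [ha m (.inr hm), hb m (.inr hm)]

theorem wires_cons_right (m : β) (L R : Multiset β) (a b : β → α) :
    wires T L (m ::ₘ R) a b = wire T (b m) (a m) + wires T L R a b := by
  rw [wires_swap, wires_cons_left, wires_swap]

@[simp] theorem cycles_wire (s t : α) : (wire T s t).cycles = 0 := rfl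

theorem between_wire_of_mem {S R : Set α} {s t : α} (hs : s ∈ S) (ht : t ∈ R) :
    (wire T s t).between S R = {(s, [], t)} :=
  between_eq_edges fun e he => by simp [Multiset.mem_singleton.1 he, hs, ht]

theorem between_wire_eq_zero {S R : Set α} {s t : α} (h : s ∈ S → t ∉ R) :
    (wire T s t).between S R = 0 :=
  between_eq_zero fun e he => by simpa [Multiset.mem_singleton.1 he] using h

section DecidableEq

variable [DecidableEq α]

theorem edges_relabel_update {v : α} (w : α) {N : Diagram α T} (hN : N.between {v} {v} = 0) :
    (N.relabel (Function.update id v w)).edges = N.between {v}ᶜ {v}ᶜ +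
      (N.between {v}ᶜ {v}).map (fun e => (e.1, e.2.1, w)) +
      (N.between {v} {v}ᶜ).map fun e => (w, e.2.1, e.2.2) := by
  rw [edges_relabel, N.edges_eq_between_add {v}, hN]
  simp only [add_zero, Multiset.map_add]
  refine congrArg₂ _ (congrArg₂ _ ?_ ?_) ?_
  · refine (Multiset.map_congr rfl fun e he => ?_).trans (Multiset.map_id _)
    obtain ⟨-, hs : e.1 ≠ v, ht : e.2.2 ≠ v⟩ := mem_between.1 he
    simp [Prod.map, hs, ht]
  · refine Multiset.map_congr rfl fun e he => ?_
    obtain ⟨-, hs : e.1 ≠ v, ht : e.2.2 = v⟩ := mem_between.1 he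
    simp [Prod.map, hs, ht]
  · refine Multiset.map_congr rfl fun e he => ?_
    obtain ⟨-, hs : e.1 = v, ht : e.2.2 ≠ v⟩ := mem_between.1 he
    simp [Prod.map, hs, ht]

theorem elim_target_wire_add {s t : α} {N : Diagram α T} (hst : s ≠ t) (ht : t ∉ N.targets) :
    (wire T s t + N).elim {t} = N.relabel (Function.update id t s) := by
  have hN (S : Set α) : N.between S {t} = 0 :=
    between_eq_zero fun e he _ h => ht (h ▸ snd_mem_targets he)
  have hin : (wire T s t).between {t}ᶜ {t} = {(s, [], t)} :=
    between_wire_of_mem (by simpa) rfl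
  have hout (R : Set α) : (wire T s t).between {t} R = 0 :=
    between_wire_eq_zero fun h => absurd h hst
  have hrest (S : Set α) : (wire T s t).between S {t}ᶜ = 0 :=
    between_wire_eq_zero fun _ => by simp
  refine Diagram.ext ?_ ?_
  · rw [edges_relabel_update s (hN _), edges_elim]
    simp [between_add, hN, hin, hout, hrest, concat]
  · simp [cycles_elim, between_add, hN, hout]

theorem elim_source_wire_add {s t : α} {N : Diagram α T} (hst : s ≠ t) (hs : s ∉ N.sources) :
    (wire T s t + N).elim {s} = N.relabel (Function.update id s t) := by
  have hN (R : Set α) : N.between {s} R = 0 :=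
    between_eq_zero fun e he h => absurd (h ▸ fst_mem_sources he) hs
  have hout : (wire T s t).between {s} {s}ᶜ = {(s, [], t)} :=
    between_wire_of_mem rfl (by simpa using hst.symm)
  have hin (S : Set α) : (wire T s t).between S {s} = 0 :=
    between_wire_eq_zero fun _ h => hst h.symm
  have hrest (R : Set α) : (wire T s t).between {s}ᶜ R = 0 :=
    between_wire_eq_zero fun h => absurd rfl h
  refine Diagram.ext ?_ ?_
  · rw [edges_relabel_update t (hN _), edges_elim]
    simp [between_add, hN, hin, hout, hrest, concat]
  · simp [cycles_elim, between_add, hN, hin]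

theorem relabel_update_wires {L R : Multiset β} {a b : β → α} (hb : Function.Injective b)
    (hab : ∀ m m', a m ≠ b m') {m : β} (hm : m ∉ L + R) :
    (wires T L R a b).relabel (Function.update id (b m) (a m)) = wires T L R a b := by
  rw [relabel_wires]
  refine wires_congr (fun m' _ => by simp [hab]) fun m' hm' => ?_
  have hne : m' ≠ m := fun h => hm (h ▸ hm')
  simp [hb.eq_iff, hne]

theorem elim_wires_cons_left_add {L R : Multiset β} {a b : β → α} {N : Diagram α T}
    (hb : Function.Injective b) (hab : ∀ m m', a m ≠ b m') {m : β} (hm : m ∉ L + R)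
    (hN : b m ∉ N.targets) :
    (wires T (m ::ₘ L) R a b + N).elim {b m} =
      wires T L R a b + N.relabel (Function.update id (b m) (a m)) := by
  have hmL : m ∉ L := fun h => hm (Multiset.mem_add.2 (.inl h))
  rw [wires_cons_left, add_assoc, elim_target_wire_add (hab m m), relabel_add,
    relabel_update_wires hb hab hm]
  simp [targets_wires, hb.eq_iff, hab, hmL, hN]

theorem elim_wires_cons_right_add {L R : Multiset β} {a b : β → α} {N : Diagram α T}
    (hb : Function.Injective b) (hab : ∀ m m', a m ≠ b m') {m : β} (hm : m ∉ L + R)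
    (hN : b m ∉ N.sources) :
    (wires T L (m ::ₘ R) a b + N).elim {b m} =
      wires T L R a b + N.relabel (Function.update id (b m) (a m)) := by
  have hmR : m ∉ R := fun h => hm (Multiset.mem_add.2 (.inr h))
  rw [wires_cons_right, add_assoc, elim_source_wire_add (hab m m).symm, relabel_add,
    relabel_update_wires hb hab hm]
  simp [sources_wires, hb.eq_iff, hab, hmR, hN]

end DecidableEq

theorem eliminate_wires_add {l : List β} {L R : Multiset β} {a b : β → α} {N : Diagram α T}
    (hl : (l : Multiset β) = L + R) (hnodup : l.Nodup) (hb : Function.Injective b)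
    (hab : ∀ m m', a m ≠ b m') (hN : ∀ m, b m ∈ N.vertices → m ∈ l)
    (hL : ∀ m ∈ L, b m ∉ N.targets) (hR : ∀ m ∈ R, b m ∉ N.sources) :
    (wires T L R a b + N).eliminate (l.map b) = N.relabel (Function.extend b a id) := by
  classical
  induction l generalizing L R N with
  | nil =>
    obtain ⟨rfl, rfl⟩ := add_eq_zero.1 hl.symm
    have hzero : wires T 0 0 a b = 0 := rfl
    simp only [List.map_nil, eliminate_nil, hzero, zero_add]
    refine (relabel_eq_self fun v hv => Function.extend_apply' _ _ _ ?_).symm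
    rintro ⟨m, rfl⟩
    exact List.not_mem_nil (hN m hv)
  | cons m l ih =>
    obtain ⟨hm, hnodup⟩ := List.nodup_cons.1 hnodup
    set u : α → α := Function.update id (b m) (a m) with hu
    have hmem {s : Multiset α} {m'} (h : b m' ∈ s.map u) : b m' ∈ s ∧ b m' ≠ b m :=
      mem_and_ne_of_mem_map_update h (hab m m')
    have hrest {L R : Multiset β} (hl : (l : Multiset β) = L + R) (hL : ∀ m ∈ L, b m ∉ N.targets)
        (hR : ∀ m ∈ R, b m ∉ N.sources) :
        (wires T L R a b + N.relabel u).eliminate (l.map b) =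
          N.relabel (Function.extend b a id) := by
      rw [ih hl hnodup, relabel_relabel, hu, extend_comp_update hb hab]
      · intro m' h
        rw [vertices_relabel] at h
        exact List.mem_of_ne_of_mem (ne_of_apply_ne b (hmem h).2) (hN m' (hmem h).1)
      · exact fun m' hm' h => hL m' hm' (hmem (targets_relabel u N ▸ h)).1
      · exact fun m' hm' h => hR m' hm' (hmem (sources_relabel u N ▸ h)).1
    have hmLR : m ∈ L + R := hl ▸ Multiset.mem_coe.2 List.mem_cons_self
    rw [← Multiset.cons_coe] at hl
    rw [List.map_cons, eliminate_cons]
    obtain hmL | hmR := Multiset.mem_add.1 hmLR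
    · obtain ⟨L, rfl⟩ := Multiset.exists_cons_of_mem hmL
      rw [Multiset.cons_add, Multiset.cons_inj_right] at hl
      rw [elim_wires_cons_left_add hb hab (by rwa [← hl]) (hL m hmL), ← hu]
      exact hrest hl (fun m hm => hL m (Multiset.mem_cons_of_mem hm)) hR
    · obtain ⟨R, rfl⟩ := Multiset.exists_cons_of_mem hmR
      rw [Multiset.add_cons, Multiset.cons_inj_right] at hl
      rw [elim_wires_cons_right_add hb hab (by rwa [← hl]) (hR m hmR), ← hu]
      exact hrest hl hL fun m hm => hR m (Multiset.mem_cons_of_mem hm)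

end Diagram

/-! ### Boundaries and labellings -/

namespace Boundary

/-- The right endpoints of a boundary, which are the endpoints that are not left. -/
def right (X : Boundary) : Finset ℕ := Finset.Icc 1 X.card \ X.left

theorem mem_right {X : Boundary} {m : ℕ} : m ∈ X.right ↔ (1 ≤ m ∧ m ≤ X.card) ∧ m ∉ X.left := by
  rw [right, Finset.mem_sdiff, Finset.mem_Icc]

theorem right_subset (X : Boundary) : X.right ⊆ Finset.Icc 1 X.card := Finset.sdiff_subset

theorem one_le_and_le_of_mem_left {X : Boundary} {m : ℕ} (hm : m ∈ X.left) :
    1 ≤ m ∧ m ≤ X.card := Finset.mem_Icc.1 (X.left_sub hm)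

theorem left_val_add_right_val_eq_Icc_val (X : Boundary) :
    X.left.val + X.right.val = (Finset.Icc 1 X.card).val := by
  rw [right, ← union_val_of_disjoint Finset.disjoint_sdiff,
    Finset.union_sdiff_of_subset X.left_sub]

theorem left_val_add_right_val (X : Boundary) :
    X.left.val + X.right.val = (List.range' 1 X.card : Multiset ℕ) := by
  rw [left_val_add_right_val_eq_Icc_val]
  exact congrArg (fun l : List ℕ => (l : Multiset ℕ)) (by simp)

theorem one_le_and_le_of_mem_left_val_add_right_val {X : Boundary} {m : ℕ}
    (hm : m ∈ X.left.val + X.right.val) : 1 ≤ m ∧ m ≤ X.card :=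
  Finset.mem_Icc.1 (Finset.mem_def.2 (X.left_val_add_right_val_eq_Icc_val ▸ hm))

theorem tensor_right (X Y : Boundary) :
    (X.tensor Y).right = X.right ∪ Y.right.image (X.card + ·) := by
  ext m
  simp only [right, tensor, Finset.mem_union, Finset.mem_image, Finset.mem_sdiff, Finset.mem_Icc]
  constructor
  · rintro ⟨⟨h₁, h₂⟩, hm⟩
    obtain h | h := le_or_gt m X.card
    · exact .inl ⟨⟨h₁, h⟩, fun hl => hm (.inl hl)⟩
    · have hadd : X.card + (m - X.card) = m := by omega
      exact .inr ⟨m - X.card, ⟨⟨by omega, by omega⟩, fun hl => hm (.inr ⟨_, hl, hadd⟩)⟩, hadd⟩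
  · rintro (⟨⟨h₁, h₂⟩, hm⟩ | ⟨l, ⟨⟨h₁, h₂⟩, hl⟩, rfl⟩)
    · refine ⟨⟨h₁, by omega⟩, ?_⟩
      rintro (h | ⟨l, hl, rfl⟩)
      · exact hm h
      · have := one_le_and_le_of_mem_left hl
        omega
    · refine ⟨⟨by omega, by omega⟩, ?_⟩
      rintro (h | ⟨l', hl', h⟩)
      · have := one_le_and_le_of_mem_left h
        omega
      · exact hl (add_left_cancel h ▸ hl')

theorem dual_right (X : Boundary) : X.dual.right = X.left.image (X.card + 1 - ·) := by
  ext m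
  simp only [right, dual, Finset.mem_image, Finset.mem_sdiff, Finset.mem_Icc]
  constructor
  · rintro ⟨⟨_, h₂⟩, hm⟩
    refine ⟨X.card + 1 - m, by_contra fun h => hm ⟨X.card + 1 - m, ?_, ?_⟩, ?_⟩
    · exact ⟨⟨by omega, by omega⟩, h⟩
    · omega
    · omega
  · rintro ⟨l, hl, rfl⟩
    have := one_le_and_le_of_mem_left hl
    refine ⟨⟨by omega, by omega⟩, ?_⟩
    rintro ⟨l', ⟨⟨_, h₂⟩, hl'⟩, h⟩
    obtain rfl : l' = l := by omega
    exact hl' hl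

theorem tensor_left_val (X Y : Boundary) :
    (X.tensor Y).left.val = X.left.val + Y.left.val.map (X.card + ·) := by
  rw [tensor, union_val_of_disjoint (disjoint_image_add_left X.left_sub fun m hm =>
    (one_le_and_le_of_mem_left hm).1), Finset.image_val_of_injOn (add_right_injective _).injOn]

theorem tensor_right_val (X Y : Boundary) :
    (X.tensor Y).right.val = X.right.val + Y.right.val.map (X.card + ·) := by
  rw [tensor_right, union_val_of_disjoint (disjoint_image_add_left X.right_subset fun m hm =>
    (mem_right.1 hm).1.1), Finset.image_val_of_injOn (add_right_injective _).injOn]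

theorem injOn_card_add_one_sub (X : Boundary) {s : Finset ℕ} (hs : s ⊆ Finset.Icc 1 X.card) :
    Set.InjOn (X.card + 1 - ·) (s : Set ℕ) := fun m hm l hl h => by
  have := Finset.mem_Icc.1 (hs hm)
  have := Finset.mem_Icc.1 (hs hl)
  dsimp only at h
  omega

theorem dual_left_val (X : Boundary) : X.dual.left.val = X.right.val.map (X.card + 1 - ·) :=
  Finset.image_val_of_injOn (X.injOn_card_add_one_sub X.right_subset)

theorem dual_right_val (X : Boundary) : X.dual.right.val = X.left.val.map (X.card + 1 - ·) := by
  rw [dual_right, Finset.image_val_of_injOn (X.injOn_card_add_one_sub X.left_sub)]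

theorem tensor_unit (X : Boundary) : X.tensor unit = X := by
  simp [tensor, unit]

theorem unit_tensor (X : Boundary) : unit.tensor X = X := by
  refine Boundary.ext (zero_add _) ?_
  simp [tensor, unit]

end Boundary

namespace Pre

variable {T : Type}

/-- The data of a multiword as a diagram whose labels are the positions of the endpoints. -/
def toDiagram (M : Pre T) : Diagram ℕ T := ⟨M.edges, M.singular⟩

end Pre

theorem isMW_iff {T : Type} {B : Boundary} {M : Pre T} :
    IsMW B M ↔ M.toDiagram.sources = B.left.val ∧ M.toDiagram.targets = B.right.val := by
  have hdisj : ∀ v ∈ B.right, v ∉ B.left := fun v hv => (Boundary.mem_right.1 hv).2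
  have hcountP (hM : ∀ e ∈ M.edges, e.1 ∈ B.left ∧ e.2.2 ∈ B.right) (v : ℕ) :
      M.edges.countP (fun e => e.1 = v ∨ e.2.2 = v) = M.toDiagram.vertices.count v :=
    (Diagram.count_vertices (M := M.toDiagram)
      (fun e he h => hdisj _ (hM e he).2 (h ▸ (hM e he).1)) v).symm
  constructor
  · rintro ⟨hM, hv⟩
    have hs : ∀ v ∈ M.toDiagram.sources, v ∈ B.left := fun v hv => by
      obtain ⟨e, he, rfl⟩ := Multiset.mem_map.1 hv
      exact (hM e he).1
    have ht : ∀ v ∈ M.toDiagram.targets, v ∈ B.right := fun v hv => by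
      obtain ⟨e, he, rfl⟩ := Multiset.mem_map.1 hv
      exact (hM e he).2
    have hvertices : M.toDiagram.vertices = B.left.val + B.right.val := by
      rw [B.left_val_add_right_val_eq_Icc_val]
      refine Multiset.ext' fun v => ?_
      rw [Multiset.count_eq_of_nodup (Finset.nodup _), ← hcountP hM]
      split_ifs with h
      · exact hv v h
      · rw [hcountP hM]
        refine Multiset.count_eq_zero_of_notMem fun h' => h ?_
        exact (Multiset.mem_add.1 h').elim (B.left_sub <| hs v ·) (B.right_subset <| ht v ·)
    exact eq_and_eq_of_add_eq_add hvertices (p := (· ∈ B.left)) hs (fun v hv => hdisj v (ht v hv))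
      (fun _ => id) hdisj
  · rintro ⟨hs, ht⟩
    have hM : ∀ e ∈ M.edges, e.1 ∈ B.left ∧ e.2.2 ∈ B.right := fun e he =>
      ⟨Finset.mem_def.2 (hs ▸ Diagram.fst_mem_sources he),
        Finset.mem_def.2 (ht ▸ Diagram.snd_mem_targets he)⟩
    refine ⟨hM, fun v hv => ?_⟩
    rw [hcountP hM, Diagram.vertices, hs, ht, B.left_val_add_right_val_eq_Icc_val]
    exact Multiset.count_eq_one_of_mem (Finset.nodup _) hv

section Labels

variable {α β : Type*} {a b : ℕ → α} {m n : ℕ}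

/-- The labelling of `X ⊗ Y` given by labellings `a` of `X` and `b` of `Y`, where `n = |X|`.
Positions start at `1`. -/
def tensorLabels (n : ℕ) (a b : ℕ → α) (m : ℕ) : α := if m ≤ n then a m else b (m - n)

/-- The labelling of `X^⊥` given by a labelling `a` of `X`, where `n = |X|`. -/
def dualLabels (n : ℕ) (a : ℕ → α) (m : ℕ) : α := a (n + 1 - m)

theorem tensorLabels_of_le (h : m ≤ n) : tensorLabels n a b m = a m := if_pos h

theorem tensorLabels_of_lt (h : n < m) : tensorLabels n a b m = b (m - n) := if_neg h.not_ge

theorem tensorLabels_add (h : 1 ≤ m) : tensorLabels n a b (n + m) = b m := by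
  rw [tensorLabels_of_lt (by omega), Nat.add_sub_cancel_left]

theorem comp_tensorLabels (f : α → β) (n : ℕ) (a b : ℕ → α) :
    f ∘ tensorLabels n a b = tensorLabels n (f ∘ a) (f ∘ b) :=
  funext fun _ => apply_ite f _ _ _

theorem tensorLabels_assoc (n n' : ℕ) (a b c : ℕ → α) :
    tensorLabels (n + n') (tensorLabels n a b) c = tensorLabels n a (tensorLabels n' b c) := by
  funext m
  grind [tensorLabels]

theorem dualLabels_tensorLabels (n n' : ℕ) (a b : ℕ → α) :
    dualLabels (n + n') (tensorLabels n a b) =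
      tensorLabels n' (dualLabels n' b) (dualLabels n a) := by
  funext m
  grind [tensorLabels, dualLabels]

theorem tensorLabels_injective (ha : Function.Injective a) (hb : Function.Injective b)
    (hab : ∀ m l, a m ≠ b l) (n : ℕ) : Function.Injective (tensorLabels n a b) := by
  intro m l h
  have := ha.eq_iff (a := m) (b := l)
  have := hb.eq_iff (a := m - n) (b := l - n)
  grind [tensorLabels]

end Labels

namespace Boundary

variable {α β : Type*}

/-- The labels `x 1, …, x |X|` of the endpoints of `X`. -/
def points (X : Boundary) (x : ℕ → α) : List α := (List.range' 1 X.card).map x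

theorem coe_points (X : Boundary) (x : ℕ → α) :
    (X.points x : Multiset α) = X.left.val.map x + X.right.val.map x := by
  rw [← Multiset.map_add, left_val_add_right_val]
  rfl

theorem nodup_points (X : Boundary) {x : ℕ → α} (hx : Function.Injective x) :
    (X.points x).Nodup := (List.nodup_range').map hx

theorem points_tensor (X Y : Boundary) (x y : ℕ → α) :
    (X.tensor Y).points (tensorLabels X.card x y) = X.points x ++ Y.points y := by
  have hrange : List.range' 1 (X.card + Y.card) =
      List.range' 1 X.card ++ (List.range' 1 Y.card).map (X.card + ·) := by
    rw [List.map_add_range', add_comm X.card 1, List.range'_append_1]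
  have hx : (List.range' 1 X.card).map (tensorLabels X.card x y) = X.points x :=
    List.map_congr_left fun m hm => tensorLabels_of_le (by grind)
  have hy : (List.range' 1 Y.card).map (tensorLabels X.card x y ∘ (X.card + ·)) = Y.points y :=
    List.map_congr_left fun m hm => tensorLabels_add (by grind)
  rw [points, tensor, hrange, List.map_append, hx, List.map_map, hy]

theorem map_tensorLabels_left_val (X Y : Boundary) (x y : ℕ → α) :
    (X.tensor Y).left.val.map (tensorLabels X.card x y) = X.left.val.map x + Y.left.val.map y := by
  rw [tensor_left_val, Multiset.map_add, Multiset.map_map]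
  exact congrArg₂ (· + ·)
    (Multiset.map_congr rfl fun m hm => tensorLabels_of_le (one_le_and_le_of_mem_left hm).2)
    (Multiset.map_congr rfl fun m hm => tensorLabels_add (one_le_and_le_of_mem_left hm).1)

theorem map_tensorLabels_right_val (X Y : Boundary) (x y : ℕ → α) :
    (X.tensor Y).right.val.map (tensorLabels X.card x y) =
      X.right.val.map x + Y.right.val.map y := by
  rw [tensor_right_val, Multiset.map_add, Multiset.map_map]
  exact congrArg₂ (· + ·)
    (Multiset.map_congr rfl fun m hm => tensorLabels_of_le (mem_right.1 hm).1.2)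
    (Multiset.map_congr rfl fun m hm => tensorLabels_add (mem_right.1 hm).1.1)

theorem map_dualLabels_left_val (X : Boundary) (x : ℕ → α) :
    X.dual.left.val.map (dualLabels X.card x) = X.right.val.map x := by
  rw [dual_left_val, Multiset.map_map]
  refine Multiset.map_congr rfl fun m hm => congrArg x ?_
  have := (mem_right.1 hm).1
  dsimp only
  omega

theorem map_dualLabels_right_val (X : Boundary) (x : ℕ → α) :
    X.dual.right.val.map (dualLabels X.card x) = X.left.val.map x := by
  rw [dual_right_val, Multiset.map_map]
  refine Multiset.map_congr rfl fun m hm => congrArg x ?_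
  have := one_le_and_le_of_mem_left hm
  dsimp only
  omega

/-- The labelling of the boundary `Y ⊗ X^⊥` of cowordisms `X → Y` given by labellings of `Y`
and `X`. -/
def homLabels (Y X : Boundary) (y x : ℕ → α) : ℕ → α :=
  tensorLabels Y.card y (dualLabels X.card x)

theorem homLabels_of_le {Y X : Boundary} {y x : ℕ → α} {m : ℕ} (h : m ≤ Y.card) :
    homLabels Y X y x m = y m := tensorLabels_of_le h

theorem homLabels_of_add_eq {Y X : Boundary} {y x : ℕ → α} {u m : ℕ} (hm : m ≤ X.card)
    (h : u + m = Y.card + X.card + 1) : homLabels Y X y x u = x m := by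
  rw [homLabels, tensorLabels_of_lt (by omega), dualLabels]
  exact congrArg x (by omega)

theorem comp_homLabels (f : α → β) (Y X : Boundary) (y x : ℕ → α) :
    f ∘ homLabels Y X y x = homLabels Y X (f ∘ y) (f ∘ x) :=
  comp_tensorLabels f _ _ _

theorem homLabels_tensor (Y W X Z : Boundary) (y w x z : ℕ → α) :
    homLabels (Y.tensor W) (X.tensor Z) (tensorLabels Y.card y w) (tensorLabels X.card x z) =
      tensorLabels Y.card y (tensorLabels (W.card + Z.card) (homLabels W Z w z)
        (dualLabels X.card x)) := by
  simp only [homLabels, tensor, dualLabels_tensorLabels, tensorLabels_assoc]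

theorem eq_of_homLabels_eq {Y X : Boundary} {y x : ℕ → α} (hy : Function.Injective y)
    (hx : Function.Injective x) (hyx : ∀ m l, y m ≠ x l) {u v : ℕ}
    (hv : v ∈ Finset.Icc 1 (Y.tensor X.dual).card)
    (h : homLabels Y X y x u = homLabels Y X y x v) : u = v := by
  have hv : 1 ≤ v ∧ v ≤ Y.card + X.card := Finset.mem_Icc.1 hv
  simp only [homLabels, tensorLabels, dualLabels] at h
  split_ifs at h
  · exact hy h
  · exact absurd h (hyx _ _)
  · exact absurd h.symm (hyx _ _)
  · have := hx h
    omega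

end Boundary

theorem IsMW.one_le_and_le_of_mem_vertices {T : Type} {B : Boundary} {M : Pre T}
    (hM : IsMW B M) {v : ℕ} (hv : v ∈ M.toDiagram.vertices) : 1 ≤ v ∧ v ≤ B.card := by
  rw [Diagram.vertices, (isMW_iff.1 hM).1, (isMW_iff.1 hM).2,
    B.left_val_add_right_val_eq_Icc_val] at hv
  exact Finset.mem_Icc.1 hv

/-! ### Contraction as elimination -/

namespace Diagram

variable {T : Type}

theorem between_eq_filter {α : Type*} {S R : Set α} {p : α × List T × α → Prop} [DecidablePred p]
    {M : Diagram α T} (h : ∀ e ∈ M.edges, e.1 ∈ S ∧ e.2.2 ∈ R ↔ p e) :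
    M.between S R = M.edges.filter p := by
  classical exact Multiset.filter_congr h

theorem notMem_of_mem_vertices_elim {α : Type*} {S : Set α} {M : Diagram α T} {v : α}
    (hv : v ∈ (M.elim S).vertices) : v ∉ S := by
  rw [vertices, sources_elim, targets_elim] at hv
  simp only [Multiset.mem_add] at hv
  obtain (h | h) | (h | h) := hv
  · obtain ⟨e, he, rfl⟩ := Multiset.mem_map.1 h
    exact (mem_between.1 he).2.1
  · obtain ⟨e, he, rfl⟩ := Multiset.mem_map.1 (Multiset.mem_of_mem_nsmul h)
    exact (mem_between.1 he).2.1
  · obtain ⟨e, he, rfl⟩ := Multiset.mem_map.1 h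
    exact (mem_between.1 he).2.2
  · obtain ⟨e, he, rfl⟩ := Multiset.mem_map.1 (Multiset.mem_of_mem_nsmul h)
    exact (mem_between.1 he).2.2

theorem disjoint_sources_targets_elim {α : Type*} {M : Diagram α T}
    (hM : Disjoint M.sources M.targets) (S : Set α) :
    Disjoint (M.elim S).sources (M.elim S).targets :=
  Multiset.disjoint_left.2 fun h h' => Multiset.disjoint_left.1 hM
    (sources_elim_subset S M h) (targets_elim_subset S M h')

end Diagram

section Contraction

variable {α : Type*} {T : Type}

theorem toDiagram_contractAt {n : ℕ} {M : Pre T}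
    (hM : Disjoint M.toDiagram.sources M.toDiagram.targets) :
    (contractAt n M).toDiagram =
      (M.toDiagram.elim {n, n + 1}).relabel fun u => if u < n then u else u - 2 := by
  set S : Set ℕ := {n, n + 1}
  have hin : ∀ u, u ∈ S ↔ u = n ∨ u = n + 1 := fun _ => Iff.rfl
  have hout : ∀ u, u ∈ Sᶜ ↔ u ≠ n ∧ u ≠ n + 1 := fun _ => not_or
  have hkept : M.toDiagram.between Sᶜ Sᶜ = M.edges.filter _ := Diagram.between_eq_filter
    fun e _ => and_congr (hout e.1) (hout e.2.2)
  have hentering : M.toDiagram.between Sᶜ S = M.edges.filter _ := Diagram.between_eq_filter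
    fun e _ => and_congr (hout e.1) (hin e.2.2)
  have hclosed : M.toDiagram.between S S = M.edges.filter _ := Diagram.between_eq_filter
    fun e _ => and_congr (hin e.1) (hin e.2.2)
  have hleaving {e : ℕ × List T × ℕ} (he : e ∈ M.toDiagram.between Sᶜ S) :
      M.toDiagram.between S Sᶜ = M.edges.filter fun f => (f.2.2 ≠ n ∧ f.2.2 ≠ n + 1) ∧
        ((e.2.2 = n ∧ f.1 = n + 1) ∨ (e.2.2 = n + 1 ∧ f.1 = n)) :=
    Diagram.between_eq_filter (M := M.toDiagram) fun f hf => by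
      obtain ⟨he, -, heS⟩ := Diagram.mem_between.1 he
      have hne : f.1 ≠ e.2.2 := fun h => Multiset.disjoint_left.1 hM
        (Diagram.fst_mem_sources hf) (h ▸ Diagram.snd_mem_targets he)
      rw [hin] at heS
      rw [hin, hout]
      grind
  refine Diagram.ext ?_
    (congrArg (fun A => M.singular + Multiset.map Diagram.closure A) hclosed.symm)
  rw [Diagram.edges_relabel, Diagram.edges_elim, Multiset.map_add, hkept]
  refine congrArg₂ (· + ·) rfl ?_
  rw [Diagram.concat, Multiset.map_bind, ← hentering]
  refine Multiset.bind_congr fun e he => ?_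
  rw [hleaving he, Multiset.map_map]
  rfl

/-- Position before contraction at `n, n + 1` of the endpoint at position `u` after contraction. -/
def skip (n u : ℕ) : ℕ := if u < n then u else u + 2

theorem relabel_skip_toDiagram_contractAt {n : ℕ} {M : Pre T}
    (hM : Disjoint M.toDiagram.sources M.toDiagram.targets) :
    (contractAt n M).toDiagram.relabel (skip n) = M.toDiagram.elim {n, n + 1} := by
  rw [toDiagram_contractAt hM, Diagram.relabel_relabel]
  refine Diagram.relabel_eq_self fun u hu => ?_
  have : ¬(u = n ∨ u = n + 1) :=
    Diagram.notMem_of_mem_vertices_elim (S := {n, n + 1}) hu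
  grind [skip]

theorem relabel_toDiagram_contractIter {i k : ℕ} {M : Pre T} {g y : ℕ → α}
    (hM : Disjoint M.toDiagram.sources M.toDiagram.targets)
    (hg : ∀ m u, 1 ≤ m → m ≤ k → (g u = y m ↔ u = i + k + 1 - m ∨ u = i + k + m)) :
    (contractIter i k M).toDiagram.relabel (fun u => if u ≤ i then g u else g (u + 2 * k)) =
      (M.toDiagram.relabel g).eliminate ((List.range' 1 k).map y) := by
  induction k generalizing M g y with
  | zero => simp [contractIter]
  | succ k ih =>
    have hpre : g ⁻¹' {y 1} = {i + k + 1, i + k + 1 + 1} := by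
      ext u
      exact hg 1 u le_rfl (by omega)
    have hcontract := relabel_skip_toDiagram_contractAt (n := i + k + 1) hM
    have hdisj : Disjoint (contractAt (i + k + 1) M).toDiagram.sources
        (contractAt (i + k + 1) M).toDiagram.targets := by
      have := Diagram.disjoint_sources_targets_elim hM {i + k + 1, i + k + 1 + 1}
      rw [← hcontract, Diagram.sources_relabel, Diagram.targets_relabel] at this
      exact Multiset.disjoint_left.2 fun h h' => Multiset.disjoint_left.1 this
        (Multiset.mem_map_of_mem _ h) (Multiset.mem_map_of_mem _ h')
    have hlabels : ((fun u => if u ≤ i then g u else g (u + 2 * (k + 1))) : ℕ → α) =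
        fun u => if u ≤ i then (g ∘ skip (i + k + 1)) u
          else (g ∘ skip (i + k + 1)) (u + 2 * k) := by
      funext u
      grind [skip]
    have hrange : (List.range' 1 (k + 1)).map y =
        y 1 :: (List.range' 1 k).map (y ∘ (1 + ·)) := by
      rw [List.range'_succ, List.map_cons, ← List.map_map, List.map_add_range']
    rw [contractIter, hlabels, ih (y := y ∘ (1 + ·)) hdisj, hrange, Diagram.eliminate_cons,
      Diagram.elim_relabel, hpre, ← hcontract, Diagram.relabel_relabel]
    intro m u hm hmk
    rw [Function.comp_apply, Function.comp_apply, hg (1 + m) _ (by omega) (by omega)]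
    grind [skip]

end Contraction

namespace Pre

variable {α β : Type*} {T : Type}

/-- The cowordism `M : X → Y` as a diagram on the labels `y` of `Y` and `x` of `X`. Sharing
labels between cowordisms glues them, so contraction becomes elimination of the shared labels. -/
def place (M : Pre T) (Y X : Boundary) (y x : ℕ → α) : Diagram α T :=
  M.toDiagram.relabel (Boundary.homLabels Y X y x)

theorem relabel_place (f : α → β) (M : Pre T) (Y X : Boundary) (y x : ℕ → α) :
    (M.place Y X y x).relabel f = M.place Y X (f ∘ y) (f ∘ x) := by
  rw [place, Diagram.relabel_relabel, Boundary.comp_homLabels, place]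

theorem place_mwTensor {Z Y X : Boundary} {τ σ : Pre T} (hτ : IsMW (Z.tensor Y.dual) τ)
    (hσ : IsMW (Y.tensor X.dual) σ) (z y x : ℕ → α) :
    (mwTensor (Z.card + Y.card) τ σ).toDiagram.relabel (tensorLabels (Z.card + Y.card)
      (Boundary.homLabels Z Y z y) (Boundary.homLabels Y X y x)) =
    τ.place Z Y z y + σ.place Y X y x := by
  have hsum : (mwTensor (Z.card + Y.card) τ σ).toDiagram =
      τ.toDiagram + σ.toDiagram.relabel (Z.card + Y.card + ·) := rfl
  rw [hsum, Diagram.relabel_add, Diagram.relabel_relabel]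
  exact congrArg₂ (· + ·)
    (Diagram.relabel_congr fun u hu => tensorLabels_of_le (hτ.one_le_and_le_of_mem_vertices hu).2)
    (Diagram.relabel_congr fun u hu => tensorLabels_add (hσ.one_le_and_le_of_mem_vertices hu).1)

theorem disjoint_sources_targets_mwTensor {B C : Boundary} {M N : Pre T} (hM : IsMW B M)
    (hN : IsMW C N) : Disjoint (mwTensor B.card M N).toDiagram.sources
      (mwTensor B.card M N).toDiagram.targets := by
  have hsum : (mwTensor B.card M N).toDiagram =
      M.toDiagram + N.toDiagram.relabel (B.card + ·) := rfl
  rw [hsum, Diagram.sources_add, Diagram.sources_relabel, Diagram.targets_add,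
    Diagram.targets_relabel, (isMW_iff.1 hM).1, (isMW_iff.1 hM).2, (isMW_iff.1 hN).1,
    (isMW_iff.1 hN).2, ← Boundary.tensor_left_val, ← Boundary.tensor_right_val]
  exact Multiset.disjoint_left.2 fun h h' => (Boundary.mem_right.1 h').2 h

theorem place_compData {Z Y X : Boundary} {τ σ : Pre T} (hτ : IsMW (Z.tensor Y.dual) τ)
    (hσ : IsMW (Y.tensor X.dual) σ) {z y x : ℕ → α} (hy : Function.Injective y)
    (hzy : ∀ m l, z m ≠ y l) (hyx : ∀ m l, y m ≠ x l) :
    (compData Y.card Z.card τ σ).place Z X z x =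
      (τ.place Z Y z y + σ.place Y X y x).eliminate (Y.points y) := by
  have hdisj : Disjoint (mwTensor (Z.card + Y.card) τ σ).toDiagram.sources
      (mwTensor (Z.card + Y.card) τ σ).toDiagram.targets := disjoint_sources_targets_mwTensor hτ hσ
  rw [← place_mwTensor hτ hσ, Boundary.points,
    ← relabel_toDiagram_contractIter (i := Z.card) hdisj]
  · refine congrArg (fun f => (compData _ _ τ σ).toDiagram.relabel f) (funext fun u => ?_)
    simp only [Boundary.homLabels, tensorLabels, dualLabels]
    grind
  · intro m u h₁ h₂
    simp only [Boundary.homLabels, tensorLabels, dualLabels]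
    split_ifs
    · simp only [hzy, false_iff]
      omega
    · rw [hy.eq_iff]
      omega
    · rw [hy.eq_iff]
      omega
    · simp only [(hyx m _).symm, false_iff]
      omega

theorem place_cowTensorData {Y X W Z : Boundary} {σ τ : Pre T} (hτ : IsMW (W.tensor Z.dual) τ)
    (y x w z : ℕ → α) :
    (cowTensorData Y.card W.card Z.card σ τ).place (Y.tensor W) (X.tensor Z)
        (tensorLabels Y.card y w) (tensorLabels X.card x z) =
      σ.place Y X y x + τ.place W Z w z := by
  have hsum : (cowTensorData Y.card W.card Z.card σ τ).toDiagram =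
      σ.toDiagram.relabel (fun u => if u ≤ Y.card then u else u + W.card + Z.card) +
        τ.toDiagram.relabel (Y.card + ·) := rfl
  rw [place, hsum, Diagram.relabel_add, Diagram.relabel_relabel, Diagram.relabel_relabel,
    Boundary.homLabels_tensor]
  refine congrArg₂ (· + ·) (Diagram.relabel_congr fun u _ => ?_)
    (Diagram.relabel_congr fun u hu => ?_)
  · simp only [Function.comp_apply, Boundary.homLabels, tensorLabels]
    grind
  · obtain ⟨h₁, h₂⟩ := hτ.one_le_and_le_of_mem_vertices hu
    exact (tensorLabels_add h₁).trans (tensorLabels_of_le h₂)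

theorem place_idPre (X : Boundary) (x x' : ℕ → α) :
    (idPre T X).place X X x x' = Diagram.wires T X.left.val X.right.val x x' := by
  have hwires : (idPre T X).toDiagram =
      Diagram.wires T X.left.val X.right.val id (2 * X.card - · + 1) := rfl
  rw [place, hwires, Diagram.relabel_wires]
  refine Diagram.wires_congr (fun m hm => ?_) fun m hm => ?_
  all_goals obtain ⟨_, h₂⟩ := Boundary.one_le_and_le_of_mem_left_val_add_right_val hm
  · exact Boundary.homLabels_of_le h₂
  · exact Boundary.homLabels_of_add_eq h₂ (by dsimp only; omega)

theorem place_symPre (X Y : Boundary) (x x' y y' : ℕ → α) :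
    (symPre T X Y).place (Y.tensor X) (X.tensor Y) (tensorLabels Y.card y x)
        (tensorLabels X.card x' y') =
      (idPre T X).place X X x x' + (idPre T Y).place Y Y y y' := by
  have hwires : (symPre T X Y).toDiagram =
      Diagram.wires T X.left.val X.right.val (Y.card + ·) (2 * X.card + 2 * Y.card - · + 1) +
        Diagram.wires T Y.left.val Y.right.val id (X.card + 2 * Y.card - · + 1) :=
    Diagram.ext (add_assoc _ _ _) rfl
  rw [place, hwires, Diagram.relabel_add, Diagram.relabel_wires, Diagram.relabel_wires,
    place_idPre, place_idPre]
  have hY : (Y.tensor X).card = Y.card + X.card := rfl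
  have hX : (X.tensor Y).card = X.card + Y.card := rfl
  refine congrArg₂ (· + ·) (Diagram.wires_congr (fun m hm => ?_) fun m hm => ?_)
    (Diagram.wires_congr (fun m hm => ?_) fun m hm => ?_)
  all_goals obtain ⟨h₁, h₂⟩ := Boundary.one_le_and_le_of_mem_left_val_add_right_val hm
  · exact (Boundary.homLabels_of_le (by dsimp only; omega)).trans (tensorLabels_add h₁)
  · exact (Boundary.homLabels_of_add_eq (by omega) (by dsimp only; omega)).trans
      (tensorLabels_of_le h₂)
  · exact (Boundary.homLabels_of_le (m := m) (by omega)).trans (tensorLabels_of_le h₂)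
  · exact (Boundary.homLabels_of_add_eq (m := X.card + m) (by omega) (by dsimp only; omega)).trans
      (tensorLabels_add h₁)

theorem sources_place {Y X : Boundary} {M : Pre T} (hM : IsMW (Y.tensor X.dual) M)
    (y x : ℕ → α) :
    (M.place Y X y x).sources = Y.left.val.map y + X.right.val.map x := by
  rw [place, Diagram.sources_relabel, (isMW_iff.1 hM).1, Boundary.homLabels,
    Boundary.map_tensorLabels_left_val, Boundary.map_dualLabels_left_val]

theorem targets_place {Y X : Boundary} {M : Pre T} (hM : IsMW (Y.tensor X.dual) M)
    (y x : ℕ → α) :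
    (M.place Y X y x).targets = Y.right.val.map y + X.left.val.map x := by
  rw [place, Diagram.targets_relabel, (isMW_iff.1 hM).2, Boundary.homLabels,
    Boundary.map_tensorLabels_right_val, Boundary.map_dualLabels_right_val]

theorem isMW_of_place {Y X : Boundary} {M : Pre T} {y x : ℕ → α} (hy : Function.Injective y)
    (hx : Function.Injective x) (hyx : ∀ m l, y m ≠ x l)
    (hs : (M.place Y X y x).sources = Y.left.val.map y + X.right.val.map x)
    (ht : (M.place Y X y x).targets = Y.right.val.map y + X.left.val.map x) :
    IsMW (Y.tensor X.dual) M := by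
  rw [place, Diagram.sources_relabel, ← X.map_dualLabels_left_val,
    ← Boundary.map_tensorLabels_left_val] at hs
  rw [place, Diagram.targets_relabel, ← X.map_dualLabels_right_val,
    ← Boundary.map_tensorLabels_right_val] at ht
  exact isMW_iff.2 ⟨multiset_eq_of_map_eq_map hs fun u v hv => Boundary.eq_of_homLabels_eq
    hy hx hyx ((Y.tensor X.dual).left_sub hv), multiset_eq_of_map_eq_map ht fun u v hv =>
    Boundary.eq_of_homLabels_eq hy hx hyx ((Y.tensor X.dual).right_subset hv)⟩

theorem eq_of_place_eq {Y X : Boundary} {M N : Pre T} (hN : IsMW (Y.tensor X.dual) N)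
    {y x : ℕ → α} (hy : Function.Injective y) (hx : Function.Injective x)
    (hyx : ∀ m l, y m ≠ x l) (h : M.place Y X y x = N.place Y X y x) : M = N := by
  have hdiagram : M.toDiagram = N.toDiagram := Diagram.eq_of_relabel_eq h fun u v hv =>
    Boundary.eq_of_homLabels_eq hy hx hyx (Finset.mem_Icc.2 (hN.one_le_and_le_of_mem_vertices hv))
  exact Pre.ext (congrArg Diagram.edges hdiagram) (congrArg Diagram.cycles hdiagram)

theorem vertices_place {Y X : Boundary} {M : Pre T} (hM : IsMW (Y.tensor X.dual) M)
    (y x : ℕ → α) :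
    (M.place Y X y x).vertices = (Y.points y : Multiset α) + (X.points x : Multiset α) := by
  rw [Diagram.vertices, sources_place hM, targets_place hM, Boundary.coe_points,
    Boundary.coe_points]
  abel

theorem eliminate_place_add_place_idPre {Y X : Boundary} {σ : Pre T}
    (hσ : IsMW (Y.tensor X.dual) σ) {y x x' : ℕ → α} (hx' : Function.Injective x')
    (hyx' : ∀ m l, y m ≠ x' l) (hxx' : ∀ m l, x m ≠ x' l) :
    (σ.place Y X y x' + (idPre T X).place X X x' x).eliminate (X.points x') =
      σ.place Y X y x := by
  rw [place_idPre, Diagram.wires_swap, add_comm, Boundary.points, Diagram.eliminate_wires_add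
    (by rw [← X.left_val_add_right_val, add_comm]) List.nodup_range' hx' hxx', relabel_place]
  · refine congrArg₂ _ (funext fun m => ?_) (funext fun m => hx'.extend_apply _ _ _)
    exact Function.extend_apply' _ _ _ fun ⟨l, h⟩ => hyx' m l h.symm
  · intro m hm
    simpa [vertices_place hσ, Boundary.points, hx'.eq_iff, hyx'] using hm
  · intro m hm
    simp [targets_place hσ, hx'.eq_iff, hyx', (Boundary.mem_right.1 hm).2]
  · intro m hm
    simp [sources_place hσ, hx'.eq_iff, hyx', Boundary.mem_right, Finset.mem_def.2 hm]

theorem eliminate_place_idPre_add_place {Y X : Boundary} {σ : Pre T}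
    (hσ : IsMW (Y.tensor X.dual) σ) {y y' x : ℕ → α} (hy' : Function.Injective y')
    (hyy' : ∀ m l, y m ≠ y' l) (hxy' : ∀ m l, x m ≠ y' l) :
    ((idPre T Y).place Y Y y y' + σ.place Y X y' x).eliminate (Y.points y') =
      σ.place Y X y x := by
  rw [place_idPre, Boundary.points, Diagram.eliminate_wires_add
    Y.left_val_add_right_val.symm List.nodup_range' hy' hyy', relabel_place]
  · refine congrArg₂ _ (funext fun m => hy'.extend_apply _ _ _) (funext fun m => ?_)
    exact Function.extend_apply' _ _ _ fun ⟨l, h⟩ => hxy' m l h.symm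
  · intro m hm
    simpa [vertices_place hσ, Boundary.points, hy'.eq_iff, hxy'] using hm
  · intro m hm
    simp [targets_place hσ, hy'.eq_iff, hxy', Boundary.mem_right, Finset.mem_def.2 hm]
  · intro m hm
    simp [sources_place hσ, hy'.eq_iff, hxy', (Boundary.mem_right.1 hm).2]

theorem notMem_vertices_place_of_mem_points {X Y Z : Boundary} {M : Pre T}
    (hM : IsMW (Y.tensor Z.dual) M) {x y z : ℕ → α} (hxy : ∀ m l, x m ≠ y l)
    (hxz : ∀ m l, x m ≠ z l) : ∀ v ∈ X.points x, v ∉ (M.place Y Z y z).vertices := by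
  intro v hv
  obtain ⟨m, -, rfl⟩ := List.mem_map.1 hv
  simp [vertices_place hM, Boundary.points, (hxy m _).symm, (hxz m _).symm]

theorem place_idPre_tensor (X Y : Boundary) (x x' y y' : ℕ → α) :
    (idPre T (X.tensor Y)).place (X.tensor Y) (X.tensor Y) (tensorLabels X.card x y)
        (tensorLabels X.card x' y') =
      (idPre T X).place X X x x' + (idPre T Y).place Y Y y y' := by
  simp only [place_idPre, Boundary.tensor_left_val, Boundary.tensor_right_val,
    Diagram.wires_add, Diagram.wires_map]
  refine congrArg₂ (· + ·) (Diagram.wires_congr (fun m hm => ?_) fun m hm => ?_)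
    (Diagram.wires_congr (fun m hm => ?_) fun m hm => ?_)
  all_goals obtain ⟨h₁, h₂⟩ := Boundary.one_le_and_le_of_mem_left_val_add_right_val hm
  exacts [tensorLabels_of_le h₂, tensorLabels_of_le h₂, tensorLabels_add h₁, tensorLabels_add h₁]

end Pre

/-! ### The laws of cowordisms -/

theorem tensorLabels_mk_injective {i j : ℕ} (hij : i ≠ j) (n : ℕ) :
    Function.Injective (tensorLabels n (Prod.mk i) (Prod.mk (β := ℕ) j)) :=
  tensorLabels_injective (Prod.mk_right_injective i) (Prod.mk_right_injective j) (by simp [hij]) n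

theorem tensorLabels_mk_ne {i j k l : ℕ} (h : i ≠ k ∧ i ≠ l ∧ j ≠ k ∧ j ≠ l) (n n' u v : ℕ) :
    tensorLabels n (Prod.mk i) (Prod.mk j) u ≠
      tensorLabels n' (Prod.mk k) (Prod.mk (β := ℕ) l) v := by
  grind [tensorLabels]

namespace Pre

variable {T : Type} {X Y Z W X' Y' X₁ X₂ X₃ Y₁ Y₂ Y₃ Z₁ Z₂ : Boundary}
  {ρ σ τ σ₁ σ₂ σ₃ τ₁ τ₂ : Pre T}

section IsMW

theorem isMW_idPre (X : Boundary) : IsMW (X.tensor X.dual) (idPre T X) := by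
  refine isMW_of_place (Prod.mk_right_injective 0) (Prod.mk_right_injective 1) (by simp) ?_ ?_
  · rw [place_idPre, Diagram.sources_wires]
  · rw [place_idPre, Diagram.targets_wires, add_comm]

theorem isMW_symPre (X Y : Boundary) :
    IsMW ((Y.tensor X).tensor (X.tensor Y).dual) (symPre T X Y) := by
  refine isMW_of_place (tensorLabels_mk_injective (i := 0) (j := 1) (by simp) Y.card)
    (tensorLabels_mk_injective (i := 2) (j := 3) (by simp) X.card)
    (tensorLabels_mk_ne (by simp) _ _) ?_ ?_
  · rw [place_symPre, Diagram.sources_add, sources_place (isMW_idPre X),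
      sources_place (isMW_idPre Y), Boundary.map_tensorLabels_left_val,
      Boundary.map_tensorLabels_right_val]
    abel
  · rw [place_symPre, Diagram.targets_add, targets_place (isMW_idPre X),
      targets_place (isMW_idPre Y), Boundary.map_tensorLabels_left_val,
      Boundary.map_tensorLabels_right_val]
    abel

theorem isMW_cowTensorData (hσ : IsMW (Y.tensor X.dual) σ) (hτ : IsMW (W.tensor Z.dual) τ) :
    IsMW ((Y.tensor W).tensor (X.tensor Z).dual)
      (cowTensorData Y.card W.card Z.card σ τ) := by
  refine isMW_of_place (tensorLabels_mk_injective (i := 0) (j := 1) (by simp) Y.card)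
    (tensorLabels_mk_injective (i := 2) (j := 3) (by simp) X.card)
    (tensorLabels_mk_ne (by simp) _ _) ?_ ?_
  · rw [place_cowTensorData hτ, Diagram.sources_add, sources_place hσ, sources_place hτ,
      Boundary.map_tensorLabels_left_val, Boundary.map_tensorLabels_right_val]
    abel
  · rw [place_cowTensorData hτ, Diagram.targets_add, targets_place hσ, targets_place hτ,
      Boundary.map_tensorLabels_left_val, Boundary.map_tensorLabels_right_val]
    abel

theorem isMW_compData (hτ : IsMW (Z.tensor Y.dual) τ) (hσ : IsMW (Y.tensor X.dual) σ) :
    IsMW (Z.tensor X.dual) (compData Y.card Z.card τ σ) := by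
  have hy := Prod.mk_right_injective (α := ℕ) (β := ℕ) 1
  obtain ⟨hs, ht⟩ := Diagram.sources_targets_eliminate
    (M := τ.place Z Y (Prod.mk 2) (Prod.mk 1) + σ.place Y X (Prod.mk 1) (Prod.mk 0))
    (S := Z.left.val.map (Prod.mk 2) + X.right.val.map (Prod.mk 0))
    (R := Z.right.val.map (Prod.mk 2) + X.left.val.map (Prod.mk 0)) (Y.nodup_points hy)
    (by
      rw [Diagram.sources_add, sources_place hτ, sources_place hσ, Boundary.coe_points]
      abel)
    (List.forall_mem_map.2 (by simp))
    (by
      rw [Diagram.targets_add, targets_place hτ, targets_place hσ, Boundary.coe_points]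
      abel)
    (List.forall_mem_map.2 (by simp))
  rw [← place_compData hτ hσ hy (by simp) (by simp)] at hs ht
  exact isMW_of_place (Prod.mk_right_injective 2) (Prod.mk_right_injective 0) (by simp) hs ht

end IsMW

section Composition

theorem nodup_targets_place_add_place_add_place (hρ : IsMW (W.tensor Z.dual) ρ)
    (hτ : IsMW (Z.tensor Y.dual) τ) (hσ : IsMW (Y.tensor X.dual) σ) :
    (ρ.place W Z (Prod.mk 3) (Prod.mk 2) + τ.place Z Y (Prod.mk 2) (Prod.mk 1) +
      σ.place Y X (Prod.mk 1) (Prod.mk 0)).targets.Nodup := by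
  have hpoints : (W.points (Prod.mk 3) ++ Z.points (Prod.mk 2) ++ Y.points (Prod.mk 1) ++
      X.points (Prod.mk 0)).Nodup := by
    have hmk (i : ℕ) : Function.Injective (Prod.mk (β := ℕ) i) := Prod.mk_right_injective i
    have hdisj {i j : ℕ} (hij : i ≠ j) (B C : Boundary) :
        (B.points (Prod.mk i)).Disjoint (C.points (Prod.mk j)) := by
      grind [List.Disjoint, Boundary.points]
    simp [List.nodup_append', Boundary.nodup_points, hmk, hdisj]
  refine Multiset.nodup_of_le (Multiset.le_iff_exists_add.2
    ⟨W.left.val.map (Prod.mk 3) + X.right.val.map (Prod.mk 0), ?_⟩) (Multiset.coe_nodup.2 hpoints)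
  simp only [Diagram.targets_add, targets_place hρ, targets_place hτ, targets_place hσ,
    ← Multiset.coe_add, Boundary.coe_points]
  abel

theorem compData_assoc (hρ : IsMW (W.tensor Z.dual) ρ) (hτ : IsMW (Z.tensor Y.dual) τ)
    (hσ : IsMW (Y.tensor X.dual) σ) :
    compData Y.card W.card (compData Z.card W.card ρ τ) σ =
      compData Z.card W.card ρ (compData Y.card Z.card τ σ) := by
  have hmk (i : ℕ) : Function.Injective (Prod.mk (β := ℕ) i) := Prod.mk_right_injective i
  have hτσ := isMW_compData hτ hσ
  refine eq_of_place_eq (isMW_compData hρ hτσ) (hmk 3) (hmk 0) (by simp) ?_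
  set R := ρ.place W Z (Prod.mk 3) (Prod.mk 2)
  set U := τ.place Z Y (Prod.mk 2) (Prod.mk 1)
  set S := σ.place Y X (Prod.mk 1) (Prod.mk 0)
  have hnodup : (R + U + S).targets.Nodup := nodup_targets_place_add_place_add_place hρ hτ hσ
  have hR : ∀ v ∈ Y.points (Prod.mk 1), v ∉ R.vertices :=
    notMem_vertices_place_of_mem_points hρ (by simp) (by simp)
  have hS : ∀ v ∈ Z.points (Prod.mk 2), v ∉ S.vertices :=
    notMem_vertices_place_of_mem_points hσ (by simp) (by simp)
  calc (compData Y.card W.card (compData Z.card W.card ρ τ) σ).place W X (Prod.mk 3) (Prod.mk 0)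
    _ = ((R + U).eliminate (Z.points (Prod.mk 2)) + S).eliminate (Y.points (Prod.mk 1)) := by
        rw [place_compData (isMW_compData hρ hτ) hσ (hmk 1) (by simp) (by simp),
          place_compData hρ hτ (hmk 2) (by simp) (by simp)]
    _ = (R + U + S).eliminate (Z.points (Prod.mk 2) ++ Y.points (Prod.mk 1)) := by
        rw [Diagram.eliminate_append, Diagram.eliminate_add hS]
    _ = (R + U + S).eliminate (Y.points (Prod.mk 1) ++ Z.points (Prod.mk 2)) :=
        Diagram.eliminate_perm List.perm_append_comm hnodup
    _ = (R + (U + S).eliminate (Y.points (Prod.mk 1))).eliminate (Z.points (Prod.mk 2)) := by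
        rw [Diagram.eliminate_append, add_assoc, add_comm R, Diagram.eliminate_add hR,
          add_comm]
    _ = (compData Z.card W.card ρ (compData Y.card Z.card τ σ)).place W X (Prod.mk 3)
          (Prod.mk 0) := by
        rw [place_compData hρ hτσ (hmk 2) (by simp) (by simp),
          place_compData hτ hσ (hmk 1) (by simp) (by simp)]

theorem compData_idPre (hσ : IsMW (Y.tensor X.dual) σ) :
    compData X.card Y.card σ (idPre T X) = σ := by
  refine eq_of_place_eq hσ (Prod.mk_right_injective 2) (Prod.mk_right_injective 0) (by simp) ?_
  rw [place_compData hσ (isMW_idPre X) (Prod.mk_right_injective 1) (by simp) (by simp),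
    eliminate_place_add_place_idPre hσ (Prod.mk_right_injective 1) (by simp) (by simp)]

theorem idPre_compData (hσ : IsMW (Y.tensor X.dual) σ) :
    compData Y.card Y.card (idPre T Y) σ = σ := by
  refine eq_of_place_eq hσ (Prod.mk_right_injective 2) (Prod.mk_right_injective 0) (by simp) ?_
  rw [place_compData (isMW_idPre Y) hσ (Prod.mk_right_injective 1) (by simp) (by simp),
    eliminate_place_idPre_add_place hσ (Prod.mk_right_injective 1) (by simp) (by simp)]

end Composition

section Tensor

theorem place_compData_tensor {α : Type*} {z y y' x : ℕ → α}
    (hτ : IsMW (Z.tensor (Y.tensor Y').dual) τ) (hσ : IsMW ((Y.tensor Y').tensor X.dual) σ)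
    (hy : Function.Injective (tensorLabels Y.card y y'))
    (hzy : ∀ m l, z m ≠ tensorLabels Y.card y y' l)
    (hyx : ∀ m l, tensorLabels Y.card y y' m ≠ x l) {A A' B B' : Diagram α T}
    (hAA' : τ.place Z (Y.tensor Y') z (tensorLabels Y.card y y') = A + A')
    (hBB' : σ.place (Y.tensor Y') X (tensorLabels Y.card y y') x = B + B')
    (hA : ∀ v ∈ Y'.points y', v ∉ A.vertices) (hA' : ∀ v ∈ Y.points y, v ∉ A'.vertices)
    (hB : ∀ v ∈ Y'.points y', v ∉ B.vertices) (hB' : ∀ v ∈ Y.points y, v ∉ B'.vertices) :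
    (compData (Y.tensor Y').card Z.card τ σ).place Z X z x =
      (A + B).eliminate (Y.points y) + (A' + B').eliminate (Y'.points y') := by
  rw [place_compData hτ hσ hy hzy hyx, hAA', hBB', Boundary.points_tensor,
    Diagram.eliminate_append_add_add hA hA' hB hB']

theorem eq_of_place_tensor_eq {M N : Pre T} {i j k l : ℕ}
    (hN : IsMW ((Y.tensor Y').tensor (X.tensor X').dual) N) (hijkl : [i, j, k, l].Nodup)
    (h : M.place (Y.tensor Y') (X.tensor X') (tensorLabels Y.card (Prod.mk i) (Prod.mk (β := ℕ) j))
        (tensorLabels X.card (Prod.mk k) (Prod.mk l)) =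
      N.place (Y.tensor Y') (X.tensor X') (tensorLabels Y.card (Prod.mk i) (Prod.mk j))
        (tensorLabels X.card (Prod.mk k) (Prod.mk l))) : M = N := by
  obtain ⟨⟨hij, hik, hil⟩, ⟨hjk, hjl⟩, hkl⟩ :
      (i ≠ j ∧ i ≠ k ∧ i ≠ l) ∧ (j ≠ k ∧ j ≠ l) ∧ k ≠ l := by simpa using hijkl
  exact eq_of_place_eq hN (tensorLabels_mk_injective hij _) (tensorLabels_mk_injective hkl _)
    (tensorLabels_mk_ne ⟨hik, hil, hjk, hjl⟩ _ _) h

theorem cowTensorData_compData (hτ₁ : IsMW (Z₁.tensor Y₁.dual) τ₁)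
    (hτ₂ : IsMW (Z₂.tensor Y₂.dual) τ₂) (hσ₁ : IsMW (Y₁.tensor X₁.dual) σ₁)
    (hσ₂ : IsMW (Y₂.tensor X₂.dual) σ₂) :
    compData (Y₁.tensor Y₂).card (Z₁.tensor Z₂).card
        (cowTensorData Z₁.card Z₂.card Y₂.card τ₁ τ₂)
        (cowTensorData Y₁.card Y₂.card X₂.card σ₁ σ₂) =
      cowTensorData Z₁.card Z₂.card X₂.card (compData Y₁.card Z₁.card τ₁ σ₁)
        (compData Y₂.card Z₂.card τ₂ σ₂) := by
  have hcomp₂ := isMW_compData hτ₂ hσ₂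
  refine eq_of_place_tensor_eq (i := 4) (j := 5) (k := 0) (l := 1)
    (isMW_cowTensorData (isMW_compData hτ₁ hσ₁) hcomp₂) (by simp) ?_
  rw [place_compData_tensor (y := Prod.mk 2) (y' := Prod.mk 3) (isMW_cowTensorData hτ₁ hτ₂)
      (isMW_cowTensorData hσ₁ hσ₂) (tensorLabels_mk_injective (by simp) _)
      (tensorLabels_mk_ne (by simp) _ _) (tensorLabels_mk_ne (by simp) _ _)
      (place_cowTensorData hτ₂ _ _ _ _) (place_cowTensorData hσ₂ _ _ _ _)
      (notMem_vertices_place_of_mem_points hτ₁ (by simp) (by simp))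
      (notMem_vertices_place_of_mem_points hτ₂ (by simp) (by simp))
      (notMem_vertices_place_of_mem_points hσ₁ (by simp) (by simp))
      (notMem_vertices_place_of_mem_points hσ₂ (by simp) (by simp)),
    place_cowTensorData hcomp₂,
    place_compData hτ₁ hσ₁ (Prod.mk_right_injective 2) (by simp) (by simp),
    place_compData hτ₂ hσ₂ (Prod.mk_right_injective 3) (by simp) (by simp)]

theorem cowTensorData_idPre (X Y : Boundary) :
    cowTensorData X.card Y.card Y.card (idPre T X) (idPre T Y) = idPre T (X.tensor Y) := by
  refine eq_of_place_tensor_eq (i := 2) (j := 3) (k := 0) (l := 1) (isMW_idPre _) (by simp) ?_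
  rw [place_cowTensorData (isMW_idPre Y), place_idPre_tensor]

theorem cowTensorData_assoc (m₁ m₂ m₃ n₂ n₃ : ℕ) (σ₁ σ₂ σ₃ : Pre T) :
    cowTensorData (m₁ + m₂) m₃ n₃ (cowTensorData m₁ m₂ n₂ σ₁ σ₂) σ₃ =
      cowTensorData m₁ (m₂ + m₃) (n₂ + n₃) σ₁ (cowTensorData m₂ m₃ n₃ σ₂ σ₃) := by
  refine Pre.ext ?_ (add_assoc _ _ _)
  simp only [cowTensorData, Multiset.map_add, Multiset.map_map, Function.comp_def, add_assoc]
  refine congrArg₂ (· + ·) ?_ (congrArg (· + _) ?_) <;>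
    exact Multiset.map_congr rfl fun e _ => by grind

theorem cowTensorData_unit (n : ℕ) (σ : Pre T) :
    cowTensorData n 0 0 σ (idPre T Boundary.unit) = σ := by
  refine Pre.ext ?_ ?_ <;> simp [cowTensorData, idPre, Boundary.unit]

theorem unit_cowTensorData (n n' : ℕ) (σ : Pre T) :
    cowTensorData 0 n n' (idPre T Boundary.unit) σ = σ := by
  refine Pre.ext ?_ ?_ <;> simp [cowTensorData, idPre, Boundary.unit]

end Tensor

section Symmetry

theorem symPre_compData_symPre (X Y : Boundary) :
    compData (Y.tensor X).card (X.tensor Y).card (symPre T Y X) (symPre T X Y) =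
      idPre T (X.tensor Y) := by
  have hX := isMW_idPre (T := T) X
  have hY := isMW_idPre (T := T) Y
  refine eq_of_place_tensor_eq (i := 4) (j := 5) (k := 0) (l := 1) (isMW_idPre _) (by simp) ?_
  rw [place_compData_tensor (y := Prod.mk 3) (y' := Prod.mk 2) (isMW_symPre Y X)
      (isMW_symPre X Y) (tensorLabels_mk_injective (by simp) _)
      (tensorLabels_mk_ne (by simp) _ _) (tensorLabels_mk_ne (by simp) _ _)
      (place_symPre _ _ _ _ _ _) ((place_symPre _ _ _ _ _ _).trans (add_comm _ _))
      (notMem_vertices_place_of_mem_points hY (by simp) (by simp))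
      (notMem_vertices_place_of_mem_points hX (by simp) (by simp))
      (notMem_vertices_place_of_mem_points hY (by simp) (by simp))
      (notMem_vertices_place_of_mem_points hX (by simp) (by simp)),
    eliminate_place_add_place_idPre hY (Prod.mk_right_injective 3) (by simp) (by simp),
    eliminate_place_add_place_idPre hX (Prod.mk_right_injective 2) (by simp) (by simp),
    place_idPre_tensor, add_comm]

theorem symPre_compData_cowTensorData (hσ : IsMW (X'.tensor X.dual) σ)
    (hτ : IsMW (Y'.tensor Y.dual) τ) :
    compData (X'.tensor Y').card (Y'.tensor X').card (symPre T X' Y')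
        (cowTensorData X'.card Y'.card Y.card σ τ) =
      compData (Y.tensor X).card (Y'.tensor X').card (cowTensorData Y'.card X'.card X.card τ σ)
        (symPre T X Y) := by
  have hX := isMW_idPre (T := T) X
  have hY := isMW_idPre (T := T) Y
  have hX' := isMW_idPre (T := T) X'
  have hY' := isMW_idPre (T := T) Y'
  have hτσ := isMW_cowTensorData hτ hσ
  refine eq_of_place_tensor_eq (i := 5) (j := 4) (k := 0) (l := 1)
    (isMW_compData hτσ (isMW_symPre X Y)) (by simp) ?_
  rw [place_compData_tensor (y := Prod.mk 2) (y' := Prod.mk 3) (isMW_symPre X' Y')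
      (isMW_cowTensorData hσ hτ) (tensorLabels_mk_injective (by simp) _)
      (tensorLabels_mk_ne (by simp) _ _) (tensorLabels_mk_ne (by simp) _ _)
      (place_symPre _ _ _ _ _ _) (place_cowTensorData hτ _ _ _ _)
      (notMem_vertices_place_of_mem_points hX' (by simp) (by simp))
      (notMem_vertices_place_of_mem_points hY' (by simp) (by simp))
      (notMem_vertices_place_of_mem_points hσ (by simp) (by simp))
      (notMem_vertices_place_of_mem_points hτ (by simp) (by simp)),
    eliminate_place_idPre_add_place hσ (Prod.mk_right_injective 2) (by simp) (by simp),
    eliminate_place_idPre_add_place hτ (Prod.mk_right_injective 3) (by simp) (by simp),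
    place_compData_tensor (y := Prod.mk 3) (y' := Prod.mk 2) hτσ
      (isMW_symPre X Y) (tensorLabels_mk_injective (by simp) _)
      (tensorLabels_mk_ne (by simp) _ _) (tensorLabels_mk_ne (by simp) _ _)
      (place_cowTensorData hσ _ _ _ _) ((place_symPre _ _ _ _ _ _).trans (add_comm _ _))
      (notMem_vertices_place_of_mem_points hτ (by simp) (by simp))
      (notMem_vertices_place_of_mem_points hσ (by simp) (by simp))
      (notMem_vertices_place_of_mem_points hY (by simp) (by simp))
      (notMem_vertices_place_of_mem_points hX (by simp) (by simp)),
    eliminate_place_add_place_idPre hσ (Prod.mk_right_injective 2) (by simp) (by simp),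
    eliminate_place_add_place_idPre hτ (Prod.mk_right_injective 3) (by simp) (by simp), add_comm]

theorem place_idPre_cowTensorData_symPre {α : Type*} (X Y Z : Boundary)
    (x x' y y' z z' : ℕ → α) :
    (cowTensorData X.card (Z.tensor Y).card (Y.tensor Z).card (idPre T X) (symPre T Y Z)).place
        ((X.tensor Z).tensor Y) ((X.tensor Y).tensor Z)
        (tensorLabels (X.tensor Z).card (tensorLabels X.card x z) y)
        (tensorLabels (X.tensor Y).card (tensorLabels X.card x' y') z') =
      (idPre T (X.tensor Z)).place (X.tensor Z) (X.tensor Z) (tensorLabels X.card x z)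
          (tensorLabels X.card x' z') +
        (idPre T Y).place Y Y y y' := by
  rw [Boundary.tensor_assoc, Boundary.tensor_assoc, place_idPre_tensor]
  refine (congrArg₂ (place _ _ _) (tensorLabels_assoc _ _ _ _ _)
    (tensorLabels_assoc _ _ _ _ _)).trans
      ((place_cowTensorData (isMW_symPre Y Z) _ _ _ _).trans ?_)
  rw [place_symPre]
  abel

theorem symPre_tensor (X Y Z : Boundary) :
    symPre T (X.tensor Y) Z =
      compData ((X.tensor Z).tensor Y).card ((Z.tensor X).tensor Y).card
        (cowTensorData (Z.tensor X).card Y.card Y.card (symPre T X Z) (idPre T Y))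
        (cowTensorData X.card (Z.tensor Y).card (Y.tensor Z).card (idPre T X)
          (symPre T Y Z)) := by
  have hY := isMW_idPre (T := T) Y
  have hXZ := isMW_symPre (T := T) X Z
  have hτ := isMW_cowTensorData hXZ hY
  have hσ := isMW_cowTensorData (isMW_idPre (T := T) X) (isMW_symPre Y Z)
  rw [← Boundary.tensor_assoc, ← Boundary.tensor_assoc] at hσ
  refine eq_of_place_eq (isMW_compData hτ hσ)
    (y := tensorLabels (Z.tensor X).card (tensorLabels Z.card (Prod.mk 8) (Prod.mk 6)) (Prod.mk 7))
    (x := tensorLabels (X.tensor Y).card (tensorLabels X.card (Prod.mk 0) (Prod.mk 1)) (Prod.mk 2))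
    (fun m l h => by grind [tensorLabels]) (fun m l h => by grind [tensorLabels])
    (fun m l h => by grind [tensorLabels]) ?_
  rw [place_compData_tensor (y := tensorLabels X.card (Prod.mk 3) (Prod.mk 5)) (y' := Prod.mk 4)
      hτ hσ (fun m l h => by grind [tensorLabels]) (fun m l h => by grind [tensorLabels])
      (fun m l h => by grind [tensorLabels]) (place_cowTensorData hY _ _ _ _)
      (place_idPre_cowTensorData_symPre X Y Z _ _ _ _ _ _)
      (notMem_vertices_place_of_mem_points hXZ (fun m l h => by grind [tensorLabels])
        (fun m l h => by grind [tensorLabels]))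
      (notMem_vertices_place_of_mem_points hY (fun m l h => by grind [tensorLabels])
        (fun m l h => by grind [tensorLabels]))
      (notMem_vertices_place_of_mem_points (isMW_idPre _) (fun m l h => by grind [tensorLabels])
        (fun m l h => by grind [tensorLabels]))
      (notMem_vertices_place_of_mem_points hY (fun m l h => by grind [tensorLabels])
        (fun m l h => by grind [tensorLabels]))]
  rw [eliminate_place_add_place_idPre hXZ (fun m l h => by grind [tensorLabels])
      (fun m l h => by grind [tensorLabels]) (fun m l h => by grind [tensorLabels]),
    eliminate_place_add_place_idPre hY (Prod.mk_right_injective 4) (by simp) (by simp),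
    place_symPre, Boundary.tensor_assoc Z X Y]
  refine (congrArg (place _ _ _ · _) (tensorLabels_assoc _ _ _ _ _)).trans
    ((place_symPre (X.tensor Y) Z _ _ _ _).trans ?_)
  rw [place_idPre_tensor]
  abel

end Symmetry

end Pre

/-- Boundaries and cowordisms over `T`, with composition by contraction,
identity cowordisms, tensor product, the unit boundary, and the symmetry
cowordisms, form a (strict) symmetric monoidal category: composition and tensor
preserve multiword-hood, composition is associative and unital, tensor is a
strictly associative and unital bifunctor, and the symmetries are natural
isomorphisms squaring to the identity and satisfying the (strict) hexagon. -/
theorem cowordisms_symmetric_monoidal_category (T : Type) :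
    -- composition of cowordisms is a cowordism
    (∀ (X Y Z : Boundary) (σ : Cowordism T X Y) (τ : Cowordism T Y Z),
      IsMW (Z.tensor X.dual) (compData Y.card Z.card τ.1 σ.1)) ∧
    -- identities are cowordisms
    (∀ X : Boundary, IsMW (X.tensor X.dual) (idPre T X)) ∧
    -- associativity of composition
    (∀ (X Y Z W : Boundary) (σ : Cowordism T X Y) (τ : Cowordism T Y Z)
        (ρ : Cowordism T Z W),
      compData Y.card W.card (compData Z.card W.card ρ.1 τ.1) σ.1 =
        compData Z.card W.card ρ.1 (compData Y.card Z.card τ.1 σ.1)) ∧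
    -- identity laws
    (∀ (X Y : Boundary) (σ : Cowordism T X Y),
      compData X.card Y.card σ.1 (idPre T X) = σ.1 ∧
      compData Y.card Y.card (idPre T Y) σ.1 = σ.1) ∧
    -- tensor product of boundaries is strictly associative and unital
    (∀ X Y Z : Boundary, (X.tensor Y).tensor Z = X.tensor (Y.tensor Z)) ∧
    (∀ X : Boundary, X.tensor Boundary.unit = X ∧ Boundary.unit.tensor X = X) ∧
    -- tensor product of cowordisms is a cowordism
    (∀ (X Y Z W : Boundary) (σ : Cowordism T X Y) (τ : Cowordism T Z W),
      IsMW ((Y.tensor W).tensor (X.tensor Z).dual)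
        (cowTensorData Y.card W.card Z.card σ.1 τ.1)) ∧
    -- tensor is functorial
    (∀ (X₁ X₂ Y₁ Y₂ Z₁ Z₂ : Boundary)
        (σ₁ : Cowordism T X₁ Y₁) (σ₂ : Cowordism T X₂ Y₂)
        (τ₁ : Cowordism T Y₁ Z₁) (τ₂ : Cowordism T Y₂ Z₂),
      compData (Y₁.card + Y₂.card) (Z₁.card + Z₂.card)
          (cowTensorData Z₁.card Z₂.card Y₂.card τ₁.1 τ₂.1)
          (cowTensorData Y₁.card Y₂.card X₂.card σ₁.1 σ₂.1) =
        cowTensorData Z₁.card Z₂.card X₂.card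
          (compData Y₁.card Z₁.card τ₁.1 σ₁.1)
          (compData Y₂.card Z₂.card τ₂.1 σ₂.1)) ∧
    (∀ X Y : Boundary,
      cowTensorData X.card Y.card Y.card (idPre T X) (idPre T Y) =
        idPre T (X.tensor Y)) ∧
    -- tensor on cowordisms is strictly associative and unital
    (∀ (X₁ X₂ X₃ Y₁ Y₂ Y₃ : Boundary) (σ₁ : Cowordism T X₁ Y₁)
        (σ₂ : Cowordism T X₂ Y₂) (σ₃ : Cowordism T X₃ Y₃),
      cowTensorData (Y₁.card + Y₂.card) Y₃.card X₃.card
          (cowTensorData Y₁.card Y₂.card X₂.card σ₁.1 σ₂.1) σ₃.1 =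
        cowTensorData Y₁.card (Y₂.card + Y₃.card) (X₂.card + X₃.card) σ₁.1
          (cowTensorData Y₂.card Y₃.card X₃.card σ₂.1 σ₃.1)) ∧
    (∀ (X Y : Boundary) (σ : Cowordism T X Y),
      cowTensorData Y.card 0 0 σ.1 (idPre T Boundary.unit) = σ.1 ∧
      cowTensorData 0 Y.card X.card (idPre T Boundary.unit) σ.1 = σ.1) ∧
    -- symmetries are cowordisms, square to the identity, are natural,
    -- and satisfy the (strict) hexagon identity
    (∀ X Y : Boundary,
      IsMW ((Y.tensor X).tensor (X.tensor Y).dual) (symPre T X Y)) ∧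
    (∀ X Y : Boundary,
      compData (Y.tensor X).card (X.tensor Y).card (symPre T Y X) (symPre T X Y) =
        idPre T (X.tensor Y)) ∧
    (∀ (X X' Y Y' : Boundary) (σ : Cowordism T X X') (τ : Cowordism T Y Y'),
      compData (X'.card + Y'.card) (Y'.card + X'.card) (symPre T X' Y')
          (cowTensorData X'.card Y'.card Y.card σ.1 τ.1) =
        compData (Y.card + X.card) (Y'.card + X'.card)
          (cowTensorData Y'.card X'.card X.card τ.1 σ.1) (symPre T X Y)) ∧
    (∀ X Y Z : Boundary,
      symPre T (X.tensor Y) Z =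
        compData (X.card + Z.card + Y.card) (Z.card + X.card + Y.card)
          (cowTensorData (Z.card + X.card) Y.card Y.card (symPre T X Z) (idPre T Y))
          (cowTensorData X.card (Z.card + Y.card) (Y.card + Z.card) (idPre T X)
            (symPre T Y Z))) := by
  refine ⟨fun X Y Z σ τ => Pre.isMW_compData τ.2 σ.2, Pre.isMW_idPre,
    fun X Y Z W σ τ ρ => Pre.compData_assoc ρ.2 τ.2 σ.2,
    fun X Y σ => ⟨Pre.compData_idPre σ.2, Pre.idPre_compData σ.2⟩, Boundary.tensor_assoc,
    fun X => ⟨X.tensor_unit, X.unit_tensor⟩,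
    fun X Y Z W σ τ => Pre.isMW_cowTensorData σ.2 τ.2, ?_, Pre.cowTensorData_idPre, ?_,
    fun X Y σ => ⟨Pre.cowTensorData_unit _ _, Pre.unit_cowTensorData _ _ _⟩, Pre.isMW_symPre,
    Pre.symPre_compData_symPre, ?_, Pre.symPre_tensor⟩
  · intro X₁ X₂ Y₁ Y₂ Z₁ Z₂ σ₁ σ₂ τ₁ τ₂
    exact Pre.cowTensorData_compData τ₁.2 τ₂.2 σ₁.2 σ₂.2
  · intro X₁ X₂ X₃ Y₁ Y₂ Y₃ σ₁ σ₂ σ₃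
    exact Pre.cowTensorData_assoc _ _ _ _ _ _ _ _
  · intro X X' Y Y' σ τ
    exact Pre.symPre_compData_cowTensorData σ.2 τ.2
end
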